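/- arXiv:1308.6399 — 3 statements merged into one kernel-verified Lean document; each statement's English description precedes it below -/
import Mathlib

section
/- Let A ⊆ ℕ be c.e. and non-computable, let m ≥ 2, and let I be an (m+3)-acceptable ideal of B(A). Then there exist a non-computable c.e. set C ⊆ A and an (m+1)-acceptable ideal J of B(C) such that for every split X ⊑ A: X ∈ I if and only if there is a computable set R ⊆ A such that for every computable set S ⊆ A ∖ R, X ∩ S ∩ C ∈ J. -/
/-- A set of natural numbers is computably enumerable if it is the domain of a
partial computable function. -/
def CE (A : Set ℕ) : Prop := ∃ f : ℕ →. ℕ, Partrec f ∧ A = f.Dom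

/-- A set of natural numbers is computable if its membership predicate is computable. -/
def IsComputableSet (A : Set ℕ) : Prop := ComputablePred (· ∈ A)

/-- `X ⊆* Y` : `X ∖ Y` is finite. -/
def SubsetStar (X Y : Set ℕ) : Prop := (X \ Y).Finite

/-- `X ⊑ A` : `X` is a split of the c.e. set `A`, i.e. `X` is c.e. and there is a
c.e. set `Y` with `X ∩ Y = ∅` and `X ∪ Y = A`. -/
def Split (A X : Set ℕ) : Prop := CE X ∧ ∃ Y : Set ℕ, CE Y ∧ X ∩ Y = ∅ ∧ X ∪ Y = A

/-- `B ⊂ₛ A` : `B` is a small subset of `A`. -/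
def SmallSubset (B A : Set ℕ) : Prop :=
  B ⊆ A ∧ ∀ U V : Set ℕ, CE U → CE V → SubsetStar (U ∩ (A \ B)) V → CE ((U \ A) ∪ V)

/-- `B ⊂ₘ A` : `B` is a major subset of `A`. -/
def MajorSubset (B A : Set ℕ) : Prop :=
  B ⊆ A ∧ (A \ B).Infinite ∧
    ∀ W : Set ℕ, CE W → A ∪ W = Set.univ → (Set.univ \ (B ∪ W)).Finite

/-- The `e`-th partial computable function, via the standard numbering by codes. -/
def phiFun (e : ℕ) : ℕ →. ℕ := (Denumerable.ofNat Nat.Partrec.Code e).eval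

/-- `W e` : the `e`-th c.e. set, the domain of the `e`-th partial computable
function. -/
def Wset (e : ℕ) : Set ℕ := (phiFun e).Dom

/-- Alternating-quantifier arithmetical hierarchy over computable relations; tuples
are flattened via the standard pairing.  `SigmaPi k true` is `Σ⁰ₖ` and
`SigmaPi k false` is `Π⁰ₖ` (level `0` means computable). -/
def SigmaPi : ℕ → Bool → (ℕ → Prop) → Prop
  | 0, _, P => ComputablePred P
  | (k+1), true, P => ∃ Q : ℕ → ℕ → Prop,
      SigmaPi k false (fun m => Q m.unpair.1 m.unpair.2) ∧ ∀ n : ℕ, P n ↔ ∃ a : ℕ, Q n a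
  | (k+1), false, P => ∃ Q : ℕ → ℕ → Prop,
      SigmaPi k true (fun m => Q m.unpair.1 m.unpair.2) ∧ ∀ n : ℕ, P n ↔ ∀ a : ℕ, Q n a

/-- A set `S ⊆ ℕ` is `Σ⁰ₖ`. -/
def SigmaK (k : ℕ) (S : Set ℕ) : Prop := SigmaPi k true (· ∈ S)

/-- `I` is an ideal of the boolean algebra `B(A)` of splits of `A`: a nonempty
collection of splits of `A` closed under union and closed downward. -/
def IdealOfSplits (A : Set ℕ) (I : Set (Set ℕ)) : Prop :=
  (∀ X ∈ I, Split A X) ∧ I.Nonempty ∧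
    (∀ X ∈ I, ∀ Y ∈ I, X ∪ Y ∈ I) ∧
    (∀ X ∈ I, ∀ Y : Set ℕ, Split A Y → Y ⊆ X → Y ∈ I)

/-- `I` is a `k`-acceptable ideal of `B(A)`: an ideal containing all computable
subsets of `A` whose index set is `Σ⁰ₖ`. -/
def Acceptable (k : ℕ) (A : Set ℕ) (I : Set (Set ℕ)) : Prop :=
  IdealOfSplits A I ∧
    (∀ R : Set ℕ, IsComputableSet R → R ⊆ A → R ∈ I) ∧
    SigmaK k {e : ℕ | Wset e ∈ I}

attribute [fun_prop] Computable
namespace Cpt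
variable {α β γ : Type} [Primcodable α] [Primcodable β] [Primcodable γ]
@[fun_prop] theorem cid : Computable (fun a : α => a) := Computable.id
@[fun_prop] theorem cconst (b : β) : Computable (fun _ : α => b) := Computable.const b
@[fun_prop] theorem ccomp {g : β → γ} {f : α → β} (hg : Computable g) (hf : Computable f) :
    Computable (fun a => g (f a)) := hg.comp hf
@[fun_prop] theorem cfst {f : α → β × γ} (hf : Computable f) : Computable (fun a => (f a).1) :=
  Computable.fst.comp hf
@[fun_prop] theorem csnd {f : α → β × γ} (hf : Computable f) : Computable (fun a => (f a).2) :=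
  Computable.snd.comp hf
@[fun_prop] theorem cpair {f : α → β} {g : α → γ} (hf : Computable f) (hg : Computable g) :
    Computable (fun a => (f a, g a)) := Computable.pair hf hg
@[fun_prop] theorem cunpair {f : α → ℕ} (hf : Computable f) : Computable (fun a => (f a).unpair) :=
  Computable.unpair.comp hf
@[fun_prop] theorem cnpair {f g : α → ℕ} (hf : Computable f) (hg : Computable g) :
    Computable (fun a => Nat.pair (f a) (g a)) := Primrec₂.natPair.to_comp.comp hf hg
@[fun_prop] theorem cadd {f g : α → ℕ} (hf : Computable f) (hg : Computable g) :
    Computable (fun a => f a + g a) := Primrec.nat_add.to_comp.comp hf hg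


/-- Arithmetical hierarchy over primcodable types: `Sg k` is `Σ⁰ₖ`
(and `Π⁰ₖ` is expressed as `Sg k` of the negation). -/
def Sg : ℕ → {α : Type} → [Primcodable α] → (α → Prop) → Prop
  | 0, _, _, P => ComputablePred P
  | (k+1), α, _, P => ∃ Q : α × ℕ → Prop, Sg k Q ∧ ∀ a, P a ↔ ∃ n, ¬ Q (a, n)

theorem Sg.congr {k : ℕ} {P Q : α → Prop} (h : Sg k P) (e : ∀ a, P a ↔ Q a) : Sg k Q := by
  have : P = Q := funext fun a => propext (e a)
  exact this ▸ h

theorem cp_iff {P : α → Prop} : ComputablePred P ↔ ∃ f : α → Bool, Computable f ∧ ∀ a, P a ↔ f a = true := by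
  rw [ComputablePred.computable_iff]
  constructor
  · rintro ⟨f, hf, rfl⟩; exact ⟨f, hf, fun a => Iff.rfl⟩
  · rintro ⟨f, hf, h⟩; exact ⟨f, hf, funext fun a => propext (h a)⟩

theorem cp_comp {P : β → Prop} {f : α → β} (h : ComputablePred P) (hf : Computable f) :
    ComputablePred (fun a => P (f a)) := by
  obtain ⟨g, hg, e⟩ := cp_iff.1 h
  exact cp_iff.2 ⟨fun a => g (f a), hg.comp hf, fun a => e _⟩

theorem cp_and {P Q : α → Prop} (h : ComputablePred P) (h' : ComputablePred Q) :
    ComputablePred (fun a => P a ∧ Q a) := by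
  obtain ⟨f, hf, e⟩ := cp_iff.1 h
  obtain ⟨g, hg, e'⟩ := cp_iff.1 h'
  exact cp_iff.2 ⟨fun a => f a && g a, Primrec.and.to_comp.comp hf hg, fun a => by simp [e, e']⟩

theorem cp_or {P Q : α → Prop} (h : ComputablePred P) (h' : ComputablePred Q) :
    ComputablePred (fun a => P a ∨ Q a) := by
  obtain ⟨f, hf, e⟩ := cp_iff.1 h
  obtain ⟨g, hg, e'⟩ := cp_iff.1 h'
  exact cp_iff.2 ⟨fun a => f a || g a, Primrec.or.to_comp.comp hf hg, fun a => by simp [e, e']⟩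

theorem cp_ball {P : α → ℕ → Prop} {N : α → ℕ} (hN : Computable N)
    (h : ComputablePred (fun p : α × ℕ => P p.1 p.2)) :
    ComputablePred (fun a => ∀ i < N a, P a i) := by
  obtain ⟨f, hf, e⟩ := cp_iff.1 h
  refine cp_iff.2 ⟨fun a => Nat.rec (motive := fun _ => Bool) true (fun i b => b && f (a, i)) (N a),
    Computable.nat_rec hN (Computable.const true)
      (Primrec.and.to_comp.comp (by fun_prop) (by fun_prop) : Computable fun p : α × ℕ × Bool => p.2.2 && f (p.1, p.2.1)).to₂, fun a => ?_⟩
  have e' : ∀ i, P a i ↔ f (a, i) = true := fun i => e (a, i)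
  simp only [e']
  induction N a with
  | zero => simp
  | succ n ih => exact Nat.forall_lt_succ_right.trans ((and_congr_left' ih).trans (by simp))

theorem Sg.comp {k : ℕ} : ∀ {α β : Type} [Primcodable α] [Primcodable β] {P : β → Prop} {f : α → β},
    Sg k P → Computable f → Sg k (fun a => P (f a)) := by
  induction k with
  | zero => intro α β _ _ P f h hf; exact cp_comp h hf
  | succ k ih =>
    intro α β _ _ P f h hf
    obtain ⟨Q, hQ, e⟩ := h
    exact ⟨fun p => Q (f p.1, p.2), ih hQ (by fun_prop), fun a => e _⟩

theorem Sg.not_succ {k : ℕ} {P : α → Prop} (h : Sg k P) : Sg (k+1) (fun a => ¬ P a) :=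
  ⟨fun p => P p.1, h.comp (by fun_prop), fun a => by simp⟩

theorem Sg.succ {k : ℕ} : ∀ {α : Type} [Primcodable α] {P : α → Prop}, Sg k P → Sg (k+1) P := by
  induction k with
  | zero =>
    intro α _ P h
    exact (Sg.not_succ (k := 0) (ComputablePred.not h)).congr (by simp)
  | succ k ih =>
    intro α _ P h
    obtain ⟨Q, hQ, e⟩ := h
    exact ⟨Q, ih hQ, e⟩

theorem Sg.mono {k l : ℕ} (hkl : k ≤ l) {P : α → Prop} (h : Sg k P) : Sg l P := by
  induction hkl with
  | refl => exact h
  | step _ ih => exact ih.succ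

theorem Sg.and_or {k : ℕ} : ∀ {α : Type} [Primcodable α] {P Q : α → Prop}, Sg k P → Sg k Q →
    Sg k (fun a => P a ∧ Q a) ∧ Sg k (fun a => P a ∨ Q a) := by
  induction k with
  | zero => intro α _ P Q h h'; exact ⟨cp_and h h', cp_or h h'⟩
  | succ k ih =>
    intro α _ P Q h h'
    obtain ⟨P', hP, e⟩ := h
    obtain ⟨Q', hQ, e'⟩ := h'
    refine ⟨⟨fun p => P' (p.1, p.2.unpair.1) ∨ Q' (p.1, p.2.unpair.2),
      (ih (hP.comp (by fun_prop)) (hQ.comp (by fun_prop))).2, fun a => ?_⟩,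
      ⟨fun p => P' p ∧ Q' p, (ih hP hQ).1, fun a => ?_⟩⟩
    · show (P a ∧ Q a) ↔ ∃ n : ℕ, ¬ (P' (a, n.unpair.1) ∨ Q' (a, n.unpair.2))
      rw [e, e']
      constructor
      · rintro ⟨⟨n, hn⟩, ⟨m, hm⟩⟩; exact ⟨Nat.pair n m, by simp [hn, hm]⟩
      · rintro ⟨n, hn⟩; push Not at hn; exact ⟨⟨_, hn.1⟩, ⟨_, hn.2⟩⟩
    · show (P a ∨ Q a) ↔ ∃ n, ¬ (P' (a, n) ∧ Q' (a, n))
      rw [e, e', ← exists_or]; simp only [not_and_or]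

theorem Sg.and {k : ℕ} {P Q : α → Prop} (h : Sg k P) (h' : Sg k Q) : Sg k (fun a => P a ∧ Q a) :=
  (Sg.and_or h h').1
theorem Sg.or {k : ℕ} {P Q : α → Prop} (h : Sg k P) (h' : Sg k Q) : Sg k (fun a => P a ∨ Q a) :=
  (Sg.and_or h h').2

theorem Sg.ex {k : ℕ} {P : α → ℕ → Prop} (h : Sg (k+1) (fun p : α × ℕ => P p.1 p.2)) :
    Sg (k+1) (fun a => ∃ n, P a n) := by
  obtain ⟨Q, hQ, e⟩ := h
  refine ⟨fun p => Q ((p.1, p.2.unpair.1), p.2.unpair.2), hQ.comp (by fun_prop), fun a => ?_⟩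
  have e' : ∀ n, P a n ↔ ∃ m, ¬ Q ((a, n), m) := fun n => e (a, n)
  simp only [e']
  constructor
  · rintro ⟨n, m, h⟩; exact ⟨Nat.pair n m, by simpa using h⟩
  · rintro ⟨n, h⟩; exact ⟨_, _, h⟩

/-- Computable list lookup. -/
def look (L i : ℕ) : ℕ := (Denumerable.ofNat (List ℕ) L).getD i 0

@[fun_prop] theorem clook {f g : α → ℕ} (hf : Computable f) (hg : Computable g) :
    Computable (fun a => look (f a) (g a)) :=
  ((Primrec.list_getD 0).comp₂ ((Primrec.ofNat (List ℕ)).comp₂ Primrec₂.left) Primrec₂.right).to_comp.comp hf hg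

theorem look_exists (N : ℕ) (c : ℕ → ℕ) : ∃ L, ∀ i < N, look L i = c i := by
  refine ⟨Encodable.encode ((List.range N).map c), fun i hi => ?_⟩
  simp [look, hi]

theorem cp_lt {f g : α → ℕ} (hf : Computable f) (hg : Computable g) :
    ComputablePred (fun a => f a < g a) := by
  exact cp_comp (P := fun p : ℕ × ℕ => p.1 < p.2) Primrec.nat_lt.computablePred (by fun_prop : Computable fun a => (f a, g a))

theorem cp_le {f g : α → ℕ} (hf : Computable f) (hg : Computable g) :
    ComputablePred (fun a => f a ≤ g a) := by
  exact cp_comp (P := fun p : ℕ × ℕ => p.1 ≤ p.2) Primrec.nat_le.computablePred (by fun_prop : Computable fun a => (f a, g a))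

theorem cp_eq {f g : α → ℕ} (hf : Computable f) (hg : Computable g) :
    ComputablePred (fun a => f a = g a) := by
  exact cp_comp (P := fun p : ℕ × ℕ => p.1 = p.2) Primrec.eq.computablePred (by fun_prop : Computable fun a => (f a, g a))

theorem Sg.of_cp {k : ℕ} {P : α → Prop} (h : ComputablePred P) : Sg k P :=
  Sg.mono (Nat.zero_le k) (show Sg 0 P from h)

theorem Sg.bq {k : ℕ} : ∀ {α : Type} [Primcodable α] {P : α → ℕ → Prop} {N : α → ℕ},
    Computable N → Sg k (fun p : α × ℕ => P p.1 p.2) →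
    Sg k (fun a => ∀ i < N a, P a i) ∧ Sg k (fun a => ∃ i < N a, P a i) := by
  induction k with
  | zero =>
    intro α _ P N hN h
    refine ⟨cp_ball hN h, ?_⟩
    have := ComputablePred.not (cp_ball (P := fun a i => ¬ P a i) hN (ComputablePred.not h))
    exact this.of_eq (by simp)
  | succ k ih =>
    intro α _ P N hN h
    obtain ⟨Q, hQ, e⟩ := h
    have e' : ∀ a n, P a n ↔ ∃ m, ¬ Q ((a, n), m) := fun a n => e (a, n)
    simp only [e']
    constructor
    · refine ⟨fun p => ∃ i < N p.1, Q ((p.1, i), look p.2 i), (ih (P := fun (p : α × ℕ) i => Q ((p.1, i), look p.2 i)) (by fun_prop) ?_).2, fun a => ?_⟩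
      · exact hQ.comp (f := fun p : (α × ℕ) × ℕ => ((p.1.1, p.2), look p.1.2 p.2)) (by fun_prop)
      · constructor
        · intro h
          choose! c hc using h
          obtain ⟨L, hL⟩ := look_exists (N a) c
          refine ⟨L, ?_⟩
          push Not
          intro i hi
          simp only [hL i hi]
          exact hc i hi
        · rintro ⟨L, hL⟩ i hi
          push Not at hL
          exact ⟨_, hL i hi⟩
    · refine ⟨fun p => ¬ (p.2.unpair.1 < N p.1) ∨ Q ((p.1, p.2.unpair.1), p.2.unpair.2), Sg.or (Sg.of_cp (ComputablePred.not (cp_lt (by fun_prop) (by fun_prop)))) (hQ.comp (by fun_prop)), fun a => ?_⟩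
      constructor
      · rintro ⟨i, hi, m, hm⟩
        exact ⟨Nat.pair i m, by simpa [hi] using hm⟩
      · rintro ⟨n, hn⟩
        push Not at hn
        exact ⟨_, hn.1, _, hn.2⟩

theorem Sg.ball {k : ℕ} {P : α → ℕ → Prop} {N : α → ℕ} (hN : Computable N)
    (h : Sg k (fun p : α × ℕ => P p.1 p.2)) : Sg k (fun a => ∀ i < N a, P a i) := (Sg.bq hN h).1
theorem Sg.bex {k : ℕ} {P : α → ℕ → Prop} {N : α → ℕ} (hN : Computable N)
    (h : Sg k (fun p : α × ℕ => P p.1 p.2)) : Sg k (fun a => ∃ i < N a, P a i) := (Sg.bq hN h).2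

/-- `Π⁰ₖ`. -/
def Pg (k : ℕ) (P : α → Prop) : Prop := Sg k (fun a => ¬ P a)
/-- `Δ⁰ₖ`. -/
def Dl (k : ℕ) (P : α → Prop) : Prop := Sg k P ∧ Pg k P

theorem Pg.congr {k : ℕ} {P Q : α → Prop} (h : Pg k P) (e : ∀ a, P a ↔ Q a) : Pg k Q :=
  Sg.congr h (fun a => not_congr (e a))
theorem Pg.comp {k : ℕ} {P : β → Prop} {f : α → β} (h : Pg k P) (hf : Computable f) :
    Pg k (fun a => P (f a)) := Sg.comp (P := fun a => ¬ P a) h hf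
theorem Pg.and {k : ℕ} {P Q : α → Prop} (h : Pg k P) (h' : Pg k Q) : Pg k (fun a => P a ∧ Q a) :=
  (Sg.or h h').congr (fun a => by tauto)
theorem Pg.or {k : ℕ} {P Q : α → Prop} (h : Pg k P) (h' : Pg k Q) : Pg k (fun a => P a ∨ Q a) :=
  (Sg.and h h').congr (fun a => by tauto)
theorem Pg.all {k : ℕ} {P : α → ℕ → Prop} (h : Pg (k+1) (fun p : α × ℕ => P p.1 p.2)) :
    Pg (k+1) (fun a => ∀ n, P a n) := (Sg.ex (P := fun a n => ¬ P a n) h).congr (by simp)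
theorem Pg.ball {k : ℕ} {P : α → ℕ → Prop} {N : α → ℕ} (hN : Computable N)
    (h : Pg k (fun p : α × ℕ => P p.1 p.2)) : Pg k (fun a => ∀ i < N a, P a i) :=
  (Sg.bex (P := fun a n => ¬ P a n) hN h).congr (by simp)
theorem Pg.bex {k : ℕ} {P : α → ℕ → Prop} {N : α → ℕ} (hN : Computable N)
    (h : Pg k (fun p : α × ℕ => P p.1 p.2)) : Pg k (fun a => ∃ i < N a, P a i) :=
  (Sg.ball (P := fun a n => ¬ P a n) hN h).congr (by simp)
theorem Pg.mono {k l : ℕ} (hkl : k ≤ l) {P : α → Prop} (h : Pg k P) : Pg l P := Sg.mono hkl h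
theorem Pg.of_cp {k : ℕ} {P : α → Prop} (h : ComputablePred P) : Pg k P := Sg.of_cp h.not
theorem Pg.not {k : ℕ} {P : α → Prop} (h : Pg k P) : Sg k (fun a => ¬ P a) := h
theorem Sg.not {k : ℕ} {P : α → Prop} (h : Sg k P) : Pg k (fun a => ¬ P a) :=
  Sg.congr h (fun a => by simp)
theorem Sg.imp {k : ℕ} {P Q : α → Prop} (h : Pg k P) (h' : Sg k Q) : Sg k (fun a => P a → Q a) :=
  (Sg.or h.not h').congr (fun a => by tauto)
theorem Pg.imp {k : ℕ} {P Q : α → Prop} (h : Sg k P) (h' : Pg k Q) : Pg k (fun a => P a → Q a) :=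
  (Pg.or h.not h').congr (fun a => by tauto)

theorem Sg.dl {k : ℕ} {P : α → Prop} (h : Sg k P) : Dl (k+1) P := ⟨h.succ, h.not_succ⟩
theorem Pg.dl {k : ℕ} {P : α → Prop} (h : Pg k P) : Dl (k+1) P :=
  ⟨(Sg.not_succ h).congr (by simp), Sg.succ h⟩
theorem Dl.congr {k : ℕ} {P Q : α → Prop} (h : Dl k P) (e : ∀ a, P a ↔ Q a) : Dl k Q :=
  ⟨h.1.congr e, h.2.congr e⟩
theorem Dl.comp {k : ℕ} {P : β → Prop} {f : α → β} (h : Dl k P) (hf : Computable f) :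
    Dl k (fun a => P (f a)) := ⟨h.1.comp hf, h.2.comp hf⟩
theorem Dl.and {k : ℕ} {P Q : α → Prop} (h : Dl k P) (h' : Dl k Q) : Dl k (fun a => P a ∧ Q a) :=
  ⟨h.1.and h'.1, h.2.and h'.2⟩
theorem Dl.or {k : ℕ} {P Q : α → Prop} (h : Dl k P) (h' : Dl k Q) : Dl k (fun a => P a ∨ Q a) :=
  ⟨h.1.or h'.1, h.2.or h'.2⟩
theorem Dl.not {k : ℕ} {P : α → Prop} (h : Dl k P) : Dl k (fun a => ¬ P a) := ⟨h.2.not, h.1.not⟩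
theorem Dl.imp {k : ℕ} {P Q : α → Prop} (h : Dl k P) (h' : Dl k Q) : Dl k (fun a => P a → Q a) :=
  ⟨Sg.imp h.2 h'.1, Pg.imp h.1 h'.2⟩
theorem Dl.iff {k : ℕ} {P Q : α → Prop} (h : Dl k P) (h' : Dl k Q) : Dl k (fun a => P a ↔ Q a) :=
  ((h.imp h').and (h'.imp h)).congr (fun a => by tauto)
theorem Dl.ball {k : ℕ} {P : α → ℕ → Prop} {N : α → ℕ} (hN : Computable N)
    (h : Dl k (fun p : α × ℕ => P p.1 p.2)) : Dl k (fun a => ∀ i < N a, P a i) :=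
  ⟨Sg.ball hN h.1, Pg.ball hN h.2⟩
theorem Dl.bex {k : ℕ} {P : α → ℕ → Prop} {N : α → ℕ} (hN : Computable N)
    (h : Dl k (fun p : α × ℕ => P p.1 p.2)) : Dl k (fun a => ∃ i < N a, P a i) :=
  ⟨Sg.bex hN h.1, Pg.bex hN h.2⟩
theorem Dl.of_cp {k : ℕ} {P : α → Prop} (h : ComputablePred P) : Dl k P := ⟨Sg.of_cp h, Pg.of_cp h⟩
theorem Dl.mono {k l : ℕ} (hkl : k ≤ l) {P : α → Prop} (h : Dl k P) : Dl l P :=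
  ⟨h.1.mono hkl, h.2.mono hkl⟩

theorem Sg.re {P : α → Prop} (h : Sg 1 P) : REPred P := by
  obtain ⟨Q, hQ, e⟩ := h
  obtain ⟨f, hf, e'⟩ := cp_iff.1 (ComputablePred.not hQ)
  have h1 : Partrec (fun a : α => Nat.rfind (fun n => Part.some (f (a, n)))) :=
    Partrec.rfind (by exact (hf.partrec : Partrec fun p : α × ℕ => Part.some (f p)).to₂)
  refine h1.dom_re.of_eq fun a => ?_
  rw [e]
  simp only [e']
  constructor
  · rintro ⟨n, hn, -⟩; exact ⟨n, by simpa using hn⟩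
  · rintro ⟨n, hn⟩; exact ⟨n, by simpa using hn, by simp⟩

theorem Sg.computable {P : α → Prop} (h : Sg 1 P) (h' : Sg 1 (fun a => ¬ P a)) : ComputablePred P :=
  ComputablePred.computable_iff_re_compl_re'.2 ⟨h.re, h'.re⟩

theorem unif {k : ℕ} {P : α → Prop} (h : Sg (k+2) P) :
    ∃ L : α → ℕ → Prop, Pg (k+1) (fun p : α × ℕ => L p.1 p.2) ∧ (∀ a, P a ↔ ∃ u, L a u) ∧
      ∀ a u v, L a u → L a v → u = v := by
  obtain ⟨Q, ⟨G, hG, eG⟩, eQ⟩ := h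
  have hD : Dl (k+1) (fun p : (α × ℕ) × ℕ => ∀ w < p.1.2, ∃ v < p.2, ¬ G ((p.1.1, w), v)) := by
    refine Dl.ball (P := fun (p : (α × ℕ) × ℕ) w => ∃ v < p.2, ¬ G ((p.1.1, w), v)) (by fun_prop) ?_
    refine Dl.bex (P := fun (p : ((α × ℕ) × ℕ) × ℕ) v => ¬ G ((p.1.1.1, p.2), v)) (by fun_prop) ?_
    exact (hG.dl.comp (by fun_prop)).not
  refine ⟨fun a u => ¬ Q (a, u.unpair.1) ∧ ((∀ w < u.unpair.1, ∃ v < u.unpair.2, ¬ G ((a, w), v)) ∧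
    ∀ z < u.unpair.2, ¬ ∀ w < u.unpair.1, ∃ v < z, ¬ G ((a, w), v)), ?_, ?_, ?_⟩
  · refine Pg.and ?_ (Dl.and ?_ ?_).2
    · exact Sg.not (Sg.comp (f := fun p : α × ℕ => (p.1, p.2.unpair.1)) ⟨G, hG, eG⟩ (by fun_prop))
    · exact hD.comp (f := fun p : α × ℕ => ((p.1, p.2.unpair.1), p.2.unpair.2)) (by fun_prop)
    · refine Dl.ball (P := fun (p : α × ℕ) z => ¬ ∀ w < p.2.unpair.1, ∃ v < z, ¬ G ((p.1, w), v)) (by fun_prop) ?_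
      exact (hD.comp (f := fun p : (α × ℕ) × ℕ => ((p.1.1, p.1.2.unpair.1), p.2)) (by fun_prop)).not
  · intro a
    rw [eQ]
    constructor
    · intro h
      classical
      have hw := Nat.find_spec h
      have hmin : ∀ w < Nat.find h, ∃ v, ¬ G ((a, w), v) := fun w hw => by
        have := Nat.find_min h hw
        rw [not_not] at this
        exact (eG _).1 this
      have hz : ∃ z, ∀ w < Nat.find h, ∃ v < z, ¬ G ((a, w), v) := by
        choose! c hc using hmin
        refine ⟨(Finset.range (Nat.find h)).sup c + 1, fun w hw => ⟨c w, ?_, hc w hw⟩⟩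
        exact Nat.lt_succ_of_le (Finset.le_sup (f := c) (Finset.mem_range.2 hw))
      refine ⟨Nat.pair (Nat.find h) (Nat.find hz), ?_⟩
      simp only [Nat.unpair_pair]
      exact ⟨hw, Nat.find_spec hz, fun z hz' => Nat.find_min hz hz'⟩
    · rintro ⟨u, hu, -⟩
      exact ⟨_, hu⟩
  · rintro a u v ⟨h1, h2, h3⟩ ⟨h1', h2', h3'⟩
    have h4 : u.unpair.1 = v.unpair.1 := by
      rcases lt_trichotomy u.unpair.1 v.unpair.1 with h | h | h
      · obtain ⟨x, _, hx⟩ := h2' _ h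
        exact absurd ((eG _).2 ⟨x, hx⟩) h1
      · exact h
      · obtain ⟨x, _, hx⟩ := h2 _ h
        exact absurd ((eG _).2 ⟨x, hx⟩) h1'
    have h5 : u.unpair.2 = v.unpair.2 := by
      rcases lt_trichotomy u.unpair.2 v.unpair.2 with h | h | h
      · exact absurd (h4 ▸ h2) (h3' _ h)
      · exact h
      · exact absurd (h4 ▸ h2') (h3 _ h)
    rw [← Nat.pair_unpair u, ← Nat.pair_unpair v, h4, h5]
end Cpt

namespace Cpt
variable {α β γ : Type} [Primcodable α] [Primcodable β] [Primcodable γ]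

theorem sp_iff (k : ℕ) : ∀ P : ℕ → Prop, (SigmaPi k true P ↔ Sg k P) ∧ (SigmaPi k false P ↔ Pg k P) := by
  induction k with
  | zero =>
    intro P
    refine ⟨Iff.rfl, ?_⟩
    constructor
    · intro h; exact ComputablePred.not h
    · intro h; exact (ComputablePred.not h).of_eq (by simp)
  | succ k ih =>
    intro P
    constructor
    · constructor
      · rintro ⟨Q, hQ, e⟩
        refine ⟨fun p => ¬ Q p.1 p.2, ?_, fun a => by simp [e]⟩
        exact (Pg.comp ((ih _).2.1 hQ) (f := fun p : ℕ × ℕ => Nat.pair p.1 p.2) (by fun_prop)).congr (by simp)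
      · rintro ⟨Q, hQ, e⟩
        refine ⟨fun a n => ¬ Q (a, n), (ih _).2.2 ?_, e⟩
        exact Sg.not (hQ.comp (by fun_prop))
    · constructor
      · rintro ⟨Q, hQ, e⟩
        refine ⟨fun p => Q p.1 p.2, ?_, fun a => by simp [e]⟩
        exact (Sg.comp ((ih _).1.1 hQ) (f := fun p : ℕ × ℕ => Nat.pair p.1 p.2) (by fun_prop)).congr (by simp)
      · rintro ⟨Q, hQ, e⟩
        refine ⟨fun a n => Q (a, n), (ih _).1.2 ?_, fun n => ?_⟩
        · exact (hQ.comp (by fun_prop))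
        · have : ¬ P n ↔ _ := e n
          rw [← not_iff_not, this]; simp

theorem sigmaK_iff (k : ℕ) (S : Set ℕ) : SigmaK k S ↔ Sg k (fun e => e ∈ S) := (sp_iff k _).1

/-- Stage approximation of `Wset`. -/
def Wst (a x s : ℕ) : Prop := (Nat.Partrec.Code.evaln s (Denumerable.ofNat Nat.Partrec.Code a) x).isSome = true

theorem cp_Wst {f g h : α → ℕ} (hf : Computable f) (hg : Computable g) (hh : Computable h) :
    ComputablePred (fun a => Wst (f a) (g a) (h a)) := by
  refine cp_iff.2 ⟨_, ?_, fun a => Iff.rfl⟩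
  have h1 : Computable (fun a => Denumerable.ofNat Nat.Partrec.Code (f a)) :=
    (Computable.ofNat Nat.Partrec.Code).comp hf
  exact Primrec.option_isSome.to_comp.comp (Nat.Partrec.Code.primrec_evaln.to_comp.comp ((hh.pair h1).pair hg))

theorem Wst_mono {a x s t : ℕ} (h : s ≤ t) (hs : Wst a x s) : Wst a x t := by
  obtain ⟨y, hy⟩ := Option.isSome_iff_exists.1 hs
  exact Option.isSome_iff_exists.2 ⟨y, Nat.Partrec.Code.evaln_mono h hy⟩

theorem mem_W {a x : ℕ} : x ∈ Wset a ↔ ∃ s, Wst a x s := by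
  unfold Wset phiFun Wst
  rw [PFun.mem_dom]
  simp only [Nat.Partrec.Code.evaln_complete, Option.isSome_iff_exists]
  exact exists_comm

theorem sg_W {f g : α → ℕ} (hf : Computable f) (hg : Computable g) :
    Sg 1 (fun a => g a ∈ Wset (f a)) := by
  simp only [mem_W]
  exact Sg.ex (P := fun a s => Wst (f a) (g a) s) (Sg.of_cp (cp_Wst (by fun_prop) (by fun_prop) (by fun_prop)))

theorem ce_W (e : ℕ) : CE (Wset e) :=
  ⟨phiFun e, Partrec.nat_iff.2 (Nat.Partrec.Code.exists_code.2 ⟨_, rfl⟩), rfl⟩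

theorem ce_iff {X : Set ℕ} : CE X ↔ ∃ e, Wset e = X := by
  constructor
  · rintro ⟨f, hf, rfl⟩
    obtain ⟨c, hc⟩ := Nat.Partrec.Code.exists_code.1 (Partrec.nat_iff.1 hf)
    exact ⟨Encodable.encode c, by simp [Wset, phiFun, hc]⟩
  · rintro ⟨e, rfl⟩; exact ce_W e

theorem ce_of_sg {X : Set ℕ} (h : Sg 1 (fun x => x ∈ X)) : CE X := by
  have h1 := h.re
  refine ⟨_, Partrec.map h1 (Computable.const 0).to₂, ?_⟩
  ext x
  simp [PFun.Dom, Part.assert]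

theorem ce_sg {X : Set ℕ} (h : CE X) : Sg 1 (fun x => x ∈ X) := by
  obtain ⟨e, rfl⟩ := ce_iff.1 h
  exact sg_W (by fun_prop) (by fun_prop)

theorem comp_iff {X : Set ℕ} : IsComputableSet X ↔ ∃ a b, Wset a = X ∧ Wset b = Xᶜ := by
  constructor
  · intro h
    obtain ⟨a, ha⟩ := ce_iff.1 (ce_of_sg (Sg.of_cp h : Sg 1 (fun x => x ∈ X)))
    obtain ⟨b, hb⟩ := ce_iff.1 (ce_of_sg (X := Xᶜ) (Sg.of_cp (ComputablePred.not h)))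
    exact ⟨a, b, ha, hb⟩
  · rintro ⟨a, b, rfl, hb⟩
    refine Sg.computable (ce_sg (ce_W a)) ?_
    exact (ce_sg (ce_W b)).congr (fun x => by rw [hb]; rfl)

theorem comp_of_finite {X : Set ℕ} (h : X.Finite) : IsComputableSet X := by
  induction X, h using Set.Finite.induction_on with
  | empty => exact cp_iff.2 ⟨fun _ => false, by fun_prop, by simp⟩
  | @insert a s _ _ ih => exact (cp_or (cp_eq (f := fun x => x) (g := fun _ => a) (by fun_prop) (by fun_prop)) ih : ComputablePred fun x => x = a ∨ x ∈ s)

@[fun_prop] theorem cpow {f : α → ℕ} (hf : Computable f) : Computable (fun a => 2 ^ (f a)) := by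
  have : Computable (fun n : ℕ => 2 ^ n) := by
    refine (Computable.nat_rec (f := fun n : ℕ => n) (g := fun _ => 1) (h := fun _ p => p.2 * 2) (by fun_prop) (by fun_prop) ?_).of_eq ?_
    · exact (Primrec.nat_mul.to_comp.comp (by fun_prop) (by fun_prop) : Computable fun p : ℕ × ℕ × ℕ => p.2.2 * 2).to₂
    · intro n
      induction n with
      | zero => rfl
      | succ n ih => rw [pow_succ, ← ih]
  exact this.comp hf

theorem cp_testBit {f g : α → ℕ} (hf : Computable f) (hg : Computable g) :
    ComputablePred (fun a => (f a).testBit (g a) = true) := by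
  have h : Computable (fun a => f a / 2 ^ (g a) % 2) :=
    Primrec.nat_mod.to_comp.comp (Primrec.nat_div.to_comp.comp hf (by fun_prop)) (by fun_prop)
  exact (cp_eq h (cconst 1)).of_eq (fun a => by simp [Nat.testBit_eq_decide_div_mod_eq])

theorem testBit_lt' {F q : ℕ} (h : F.testBit q = true) : q < F :=
  lt_of_lt_of_le Nat.lt_two_pow_self (Nat.ge_two_pow_of_testBit h)

theorem exists_mask (n : ℕ) (P : ℕ → Prop) : ∃ F : ℕ, ∀ q, F.testBit q = true ↔ q < n ∧ P q := by
  classical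
  induction n with
  | zero => exact ⟨0, by simp⟩
  | succ n ih =>
    obtain ⟨F, hF⟩ := ih
    by_cases h : P n
    · refine ⟨F ||| 2 ^ n, fun q => ?_⟩
      rw [Nat.testBit_or, Bool.or_eq_true, hF, Nat.testBit_two_pow]
      simp only [decide_eq_true_eq]
      constructor
      · rintro (h1 | rfl)
        · exact ⟨by omega, h1.2⟩
        · exact ⟨by omega, h⟩
      · rintro ⟨h1, h2⟩
        by_cases h3 : n = q
        · exact Or.inr h3
        · exact Or.inl ⟨by omega, h2⟩
    · refine ⟨F, fun q => ?_⟩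
      rw [hF]
      constructor
      · rintro ⟨h1, h2⟩; exact ⟨by omega, h2⟩
      · rintro ⟨h1, h2⟩
        refine ⟨?_, h2⟩
        by_contra h3
        have : q = n := by omega
        exact h (this ▸ h2)
end Cpt

namespace Cpt
variable {α β γ : Type} [Primcodable α] [Primcodable β] [Primcodable γ]

/-- Element considered at stage `s`. -/
def xs (s : ℕ) : ℕ := s.unpair.1.unpair.1
/-- Requirement considered at stage `s`. -/
def es (s : ℕ) : ℕ := s.unpair.1.unpair.2
@[fun_prop] theorem cxs {f : α → ℕ} (hf : Computable f) : Computable (fun a => xs (f a)) := by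
  unfold xs; fun_prop
@[fun_prop] theorem ces {f : α → ℕ} (hf : Computable f) : Computable (fun a => es (f a)) := by
  unfold es; fun_prop
theorem exists_stage (x e N : ℕ) : ∃ s, N ≤ s ∧ xs s = x ∧ es s = e :=
  ⟨Nat.pair (Nat.pair x e) N, Nat.right_le_pair _ _, by simp [xs], by simp [es]⟩

/-- Stagewise data for the construction. -/
structure Dat where
  A : ℕ → ℕ → Prop
  Z : ℕ → ℕ → ℕ → Prop
  Y : ℕ → ℕ → ℕ → Prop
  cA : ComputablePred (fun p : ℕ × ℕ => A p.1 p.2)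
  cZ : ComputablePred (fun p : ℕ × ℕ × ℕ => Z p.1 p.2.1 p.2.2)
  cY : ComputablePred (fun p : ℕ × ℕ × ℕ => Y p.1 p.2.1 p.2.2)
  mA : ∀ x s t, s ≤ t → A x s → A x t
  mZ : ∀ e x s t, s ≤ t → Z e x s → Z e x t
  mY : ∀ e x s t, s ≤ t → Y e x s → Y e x t

namespace Dat
variable (D : Dat)

theorem dA {f g : α → ℕ} (hf : Computable f) (hg : Computable g) : Dl 0 (fun a => D.A (f a) (g a)) :=
  (Dl.of_cp D.cA).comp (f := fun a => (f a, g a)) (by fun_prop)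
theorem dZ {f g h : α → ℕ} (hf : Computable f) (hg : Computable g) (hh : Computable h) :
    Dl 0 (fun a => D.Z (f a) (g a) (h a)) :=
  (Dl.of_cp D.cZ).comp (f := fun a => (f a, g a, h a)) (by fun_prop)
theorem dY {f g h : α → ℕ} (hf : Computable f) (hg : Computable g) (hh : Computable h) :
    Dl 0 (fun a => D.Y (f a) (g a) (h a)) :=
  (Dl.of_cp D.cY).comp (f := fun a => (f a, g a, h a)) (by fun_prop)

/-- All of `A` visible below `t` at stage `t` has been decided by `e` at stage `s`. -/
def Cond (e t s : ℕ) : Prop := ∀ y < t + 1, D.A y t → D.Z e y s ∨ D.Y e y s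

theorem dCond {f g h : α → ℕ} (hf : Computable f) (hg : Computable g) (hh : Computable h) :
    Dl 0 (fun a => D.Cond (f a) (g a) (h a)) := by
  unfold Cond
  refine Dl.ball (P := fun a y => D.A y (g a) → D.Z (f a) y (h a) ∨ D.Y (f a) y (h a)) (by fun_prop) ?_
  exact (D.dA (by fun_prop) (by fun_prop)).imp
    ((D.dZ (by fun_prop) (by fun_prop) (by fun_prop)).or (D.dY (by fun_prop) (by fun_prop) (by fun_prop)))

/-- Admissibility of stage `s`, given the set `T` of earlier successful stages. -/
def Adm (T : ℕ → Prop) (s : ℕ) : Prop :=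
  D.A (xs s) s ∧ D.Z (es s) (xs s) s ∧
  (∀ t < s, T t → (¬ xs t = xs s ∧ (es t = es s → xs t < xs s))) ∧
  ∀ e < es s, ((D.Z e (xs s) s ∨ D.Y e (xs s) s) ∨ ∀ t < s, T t → D.Cond e t s → xs t < xs s) ∧
    (D.Z e (xs s) s → ∃ t < s, T t ∧ es t = e ∧ xs s ≤ xs t)

theorem adm_congr {T T' : ℕ → Prop} {s : ℕ} (h : ∀ t < s, T t ↔ T' t) (a : D.Adm T s) : D.Adm T' s := by
  refine ⟨a.1, a.2.1, fun t ht hT => a.2.2.1 t ht ((h t ht).2 hT), fun e he => ⟨?_, fun hz => ?_⟩⟩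
  · rcases (a.2.2.2 e he).1 with h1 | h1
    · exact Or.inl h1
    · exact Or.inr fun t ht hT => h1 t ht ((h t ht).2 hT)
  · obtain ⟨t, ht, hT, h2⟩ := (a.2.2.2 e he).2 hz
    exact ⟨t, ht, (h t ht).1 hT, h2⟩

open Classical in
/-- History of the construction. -/
noncomputable def hist : ℕ → List Bool
  | 0 => []
  | s + 1 => hist s ++ [decide (D.Adm (fun t => (hist s).getD t false = true) (hist s).length)]

theorem hist_length (s : ℕ) : (D.hist s).length = s := by
  induction s with
  | zero => rfl
  | succ s ih => simp [hist, ih]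

/-- Stage `s` is successful. -/
def taken (s : ℕ) : Prop := D.Adm (fun t => (D.hist s).getD t false = true) s

theorem hist_get {s t : ℕ} (h : t < s) : (D.hist s).getD t false = true ↔ D.taken t := by
  induction s with
  | zero => omega
  | succ s ih =>
    rw [hist]
    rcases Nat.lt_succ_iff_lt_or_eq.1 h with h1 | h1
    · rw [List.getD_append _ _ _ _ (by rw [hist_length]; exact h1)]
      exact ih h1
    · subst h1
      rw [List.getD_append_right _ _ _ _ (by rw [hist_length])]
      simp [hist_length, taken]

theorem taken_iff (s : ℕ) : D.taken s ↔ D.Adm D.taken s := by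
  constructor
  · exact D.adm_congr fun t ht => D.hist_get ht
  · exact D.adm_congr fun t ht => (D.hist_get ht).symm

theorem d_getD {f : α → List Bool} {g : α → ℕ} (hf : Computable f) (hg : Computable g) :
    Dl 0 (fun a => (f a).getD (g a) false = true) :=
  Dl.of_cp (cp_iff.2 ⟨_, (Primrec.list_getD false).to_comp.comp hf hg, fun _ => Iff.rfl⟩)

@[fun_prop] theorem clen {f : α → List Bool} (hf : Computable f) : Computable (fun a => (f a).length) :=
  Primrec.list_length.to_comp.comp hf

theorem dAdm : Dl 0 (fun h : List Bool => D.Adm (fun t => h.getD t false = true) h.length) := by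
  unfold Adm
  refine (D.dA (by fun_prop) (by fun_prop)).and ((D.dZ (by fun_prop) (by fun_prop) (by fun_prop)).and (Dl.and ?_ ?_))
  · refine Dl.ball (P := fun (h : List Bool) t => h.getD t false = true →
      (¬ xs t = xs h.length ∧ (es t = es h.length → xs t < xs h.length))) (by fun_prop) ?_
    refine (d_getD (by fun_prop) (by fun_prop)).imp (Dl.and ?_ ?_)
    · exact (Dl.of_cp (cp_eq (by fun_prop) (by fun_prop))).not
    · exact (Dl.of_cp (cp_eq (by fun_prop) (by fun_prop))).imp (Dl.of_cp (cp_lt (by fun_prop) (by fun_prop)))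
  · refine Dl.ball (P := fun (h : List Bool) e => ((D.Z e (xs h.length) h.length ∨ D.Y e (xs h.length) h.length) ∨ ∀ t < h.length, h.getD t false = true → D.Cond e t h.length → xs t < xs h.length) ∧
    (D.Z e (xs h.length) h.length → ∃ t < h.length, h.getD t false = true ∧ es t = e ∧ xs h.length ≤ xs t)) (by fun_prop) ?_
    refine Dl.and (Dl.or (Dl.or ?_ ?_) ?_) (Dl.imp ?_ ?_)
    · exact D.dZ (by fun_prop) (by fun_prop) (by fun_prop)
    · exact D.dY (by fun_prop) (by fun_prop) (by fun_prop)
    · refine Dl.ball (P := fun (p : List Bool × ℕ) t => p.1.getD t false = true → D.Cond p.2 t p.1.length → xs t < xs p.1.length) (by fun_prop) ?_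
      refine (d_getD (by fun_prop) (by fun_prop)).imp (Dl.imp (D.dCond (by fun_prop) (by fun_prop) (by fun_prop)) ?_)
      exact Dl.of_cp (cp_lt (by fun_prop) (by fun_prop))
    · exact D.dZ (by fun_prop) (by fun_prop) (by fun_prop)
    · refine Dl.bex (P := fun (p : List Bool × ℕ) t => p.1.getD t false = true ∧ es t = p.2 ∧ xs p.1.length ≤ xs t) (by fun_prop) ?_
      refine (d_getD (by fun_prop) (by fun_prop)).and (Dl.and ?_ ?_)
      · exact Dl.of_cp (cp_eq (by fun_prop) (by fun_prop))
      · exact Dl.of_cp (cp_le (by fun_prop) (by fun_prop))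

theorem c_hist : Computable D.hist := by
  classical
  have h1 : Computable (fun h : List Bool => decide (D.Adm (fun t => h.getD t false = true) h.length)) :=
    ComputablePred.decide D.dAdm.1
  refine (Computable.nat_rec (f := fun n : ℕ => n) (g := fun _ => ([] : List Bool))
    (h := fun _ p => p.2 ++ [decide (D.Adm (fun t => p.2.getD t false = true) p.2.length)])
    (by fun_prop) (by fun_prop) ?_).of_eq ?_
  · have h2 : Computable (fun p : ℕ × ℕ × List Bool => p.2.2) := by fun_prop
    exact (Primrec.list_concat.to_comp.comp h2 (h1.comp h2)).to₂
  · intro n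
    induction n with
    | zero => rfl
    | succ n ih =>
      rw [hist]
      simp only [ih]

theorem cp_taken : ComputablePred D.taken := by
  have := cp_comp (P := fun h : List Bool => D.Adm (fun t => h.getD t false = true) h.length) D.dAdm.1 D.c_hist
  refine this.of_eq fun s => ?_
  rw [hist_length]; rfl

theorem dT {f : α → ℕ} (hf : Computable f) : Dl 0 (fun a => D.taken (f a)) :=
  (Dl.of_cp D.cp_taken).comp hf

/-- The set of elements taken for `e`. -/
def R (e : ℕ) : Set ℕ := {x | ∃ s, D.taken s ∧ es s = e ∧ xs s = x}

theorem taken_inj {s t : ℕ} (hs : D.taken s) (ht : D.taken t) (h : xs s = xs t) : s = t := by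
  rcases lt_trichotomy s t with h1 | h1 | h1
  · exact absurd h (((D.taken_iff t).1 ht).2.2.1 s h1 hs).1
  · exact h1
  · exact absurd h.symm (((D.taken_iff s).1 hs).2.2.1 t h1 ht).1

theorem taken_mono {s t : ℕ} (hs : D.taken s) (ht : D.taken t) (h : es s = es t) (hx : xs s ≤ xs t) : s ≤ t := by
  by_contra h1
  push Not at h1
  have := (((D.taken_iff s).1 hs).2.2.1 t h1 ht).2 h.symm
  omega

theorem R_disj {e e' x : ℕ} (h : x ∈ D.R e) (h' : x ∈ D.R e') : e = e' := by
  obtain ⟨s, hs, rfl, rfl⟩ := h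
  obtain ⟨t, ht, rfl, h2⟩ := h'
  rw [D.taken_inj ht hs h2]

theorem R_sub_A {e x : ℕ} (h : x ∈ D.R e) : ∃ s, D.A x s := by
  obtain ⟨s, hs, rfl, rfl⟩ := h
  exact ⟨s, ((D.taken_iff s).1 hs).1⟩

theorem R_sub_Z {e x : ℕ} (h : x ∈ D.R e) : ∃ s, D.Z e x s := by
  obtain ⟨s, hs, rfl, rfl⟩ := h
  exact ⟨s, ((D.taken_iff s).1 hs).2.1⟩

theorem sg_R {f g : α → ℕ} (hf : Computable f) (hg : Computable g) : Sg 1 (fun a => g a ∈ D.R (f a)) := by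
  refine Sg.ex (P := fun a s => D.taken s ∧ es s = f a ∧ xs s = g a) ?_
  exact (((D.dT (by fun_prop)).and ((Dl.of_cp (cp_eq (by fun_prop) (by fun_prop))).and
    (Dl.of_cp (cp_eq (by fun_prop) (by fun_prop))))).mono (by omega)).1

theorem comp_R (e : ℕ) : IsComputableSet (D.R e) := by
  by_cases hfin : (D.R e).Finite
  · exact comp_of_finite hfin
  refine Sg.computable (D.sg_R (by fun_prop) (by fun_prop)) ?_
  have : Sg 1 (fun x => ∃ s, D.taken s ∧ es s = e ∧ x ≤ xs s ∧ ∀ t < s + 1, ¬ (D.taken t ∧ es t = e ∧ xs t = x)) := by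
    refine Sg.ex (P := fun x s => D.taken s ∧ es s = e ∧ x ≤ xs s ∧ ∀ t < s + 1, ¬ (D.taken t ∧ es t = e ∧ xs t = x)) ?_
    refine Sg.mono (k := 0) (by omega) (Dl.and (D.dT (by fun_prop)) (Dl.and ?_ (Dl.and ?_ ?_))).1
    · exact Dl.of_cp (cp_eq (by fun_prop) (by fun_prop))
    · exact Dl.of_cp (cp_le (by fun_prop) (by fun_prop))
    · refine Dl.ball (P := fun (p : ℕ × ℕ) t => ¬ (D.taken t ∧ es t = e ∧ xs t = p.1)) (by fun_prop) ?_
      exact (Dl.and (D.dT (by fun_prop)) (Dl.and (Dl.of_cp (cp_eq (by fun_prop) (by fun_prop)))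
        (Dl.of_cp (cp_eq (by fun_prop) (by fun_prop))))).not
  refine this.congr fun x => ?_
  constructor
  · rintro ⟨s, hs, he, hx, h⟩ ⟨t, ht, he', rfl⟩
    exact h t (Nat.lt_succ_of_le (D.taken_mono ht hs (by rw [he, he']) hx)) ⟨ht, he', rfl⟩
  · intro hx
    obtain ⟨y, ⟨s, hs, he, rfl⟩, hy⟩ := Set.Infinite.exists_gt hfin x
    exact ⟨s, hs, he, hy.le, fun t _ ht => hx ⟨t, ht⟩⟩

open Classical in
/-- Number of earlier successes of `e`. -/
noncomputable def cnt (e s : ℕ) : ℕ := Nat.count (fun t => D.taken t ∧ es t = e) s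

@[fun_prop] theorem c_cnt {f g : α → ℕ} (hf : Computable f) (hg : Computable g) :
    Computable (fun a => D.cnt (f a) (g a)) := by
  classical
  have h0 : ComputablePred (fun p : ℕ × ℕ => D.taken p.2 ∧ es p.2 = p.1) :=
    ((D.dT (by fun_prop)).and (Dl.of_cp (cp_eq (by fun_prop) (by fun_prop)))).1
  have h1 : Computable (fun p : ℕ × ℕ => decide (D.taken p.2 ∧ es p.2 = p.1)) := h0.decide
  have h2 : Computable (fun p : ℕ × ℕ => D.cnt p.1 p.2) := by
    refine (Computable.nat_rec (f := fun p : ℕ × ℕ => p.2) (g := fun _ => 0)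
      (h := fun p q => q.2 + cond (decide (D.taken q.1 ∧ es q.1 = p.1)) 1 0) (by fun_prop) (by fun_prop) ?_).of_eq ?_
    · have h3 : Computable (fun r : (ℕ × ℕ) × ℕ × ℕ => decide (D.taken r.2.1 ∧ es r.2.1 = r.1.1)) :=
        h1.comp (f := fun p : ℕ × ℕ => decide (D.taken p.2 ∧ es p.2 = p.1)) (g := fun r : (ℕ × ℕ) × ℕ × ℕ => (r.1.1, r.2.1)) (by fun_prop)
      have h4 := Computable.cond h3 (cconst 1) (cconst 0)
      exact (cadd (f := fun r : (ℕ × ℕ) × ℕ × ℕ => r.2.2) (by fun_prop) h4).to₂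
    · rintro ⟨e, n⟩
      simp only [cnt]
      induction n with
      | zero => simp
      | succ n ih =>
        rw [Nat.count_succ, ← ih]
        by_cases h : D.taken n ∧ es n = e <;> simp [h]
  exact h2.comp (hf.pair hg)

/-- The constructed set. -/
def C : Set ℕ := {x | ∃ s, D.taken s ∧ xs s = x ∧ 0 ∈ Wset (D.cnt (es s) s)}

theorem ce_C : CE D.C := by
  refine ce_of_sg (Sg.ex (P := fun x s => D.taken s ∧ xs s = x ∧ 0 ∈ Wset (D.cnt (es s) s)) ?_)
  refine Sg.and ((D.dT (by fun_prop)).mono (by omega)).1 (Sg.and (Sg.of_cp (cp_eq (by fun_prop) (by fun_prop))) ?_)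
  exact sg_W (by fun_prop) (by fun_prop)

theorem C_sub {x : ℕ} (h : x ∈ D.C) : ∃ e, x ∈ D.R e := by
  obtain ⟨s, hs, hx, -⟩ := h
  exact ⟨es s, s, hs, rfl, hx⟩

theorem K_nc : ¬ ComputablePred (fun n : ℕ => 0 ∈ Wset n) := by
  intro h
  have h1 := cp_comp h (Computable.encode (α := Nat.Partrec.Code))
  apply ComputablePred.halting_problem 0
  refine h1.of_eq fun c => ?_
  simp [Wset, phiFun, PFun.Dom]

theorem R_fin {e : ℕ} (h : IsComputableSet (D.R e ∩ D.C)) : (D.R e).Finite := by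
  classical
  by_contra hinf
  have hinf' : {t | D.taken t ∧ es t = e}.Infinite := by
    intro hf
    refine hinf ((hf.image xs).subset ?_)
    rintro x ⟨s, hs, he, rfl⟩
    exact ⟨s, ⟨hs, he⟩, rfl⟩
  have hex : ∀ n, ∃ s, (D.taken s ∧ es s = e) ∧ D.cnt e s = n := fun n =>
    ⟨Nat.nth (fun t => D.taken t ∧ es t = e) n, Nat.nth_mem_of_infinite hinf' n,
      Nat.count_nth_of_infinite hinf' n⟩
  have key : ∀ s, D.taken s → es s = e → (xs s ∈ D.R e ∩ D.C ↔ 0 ∈ Wset (D.cnt e s)) := by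
    intro s hs he
    constructor
    · rintro ⟨-, t, ht, hx, h0⟩
      have := D.taken_inj ht hs hx
      subst this
      rwa [he] at h0
    · intro h0
      exact ⟨⟨s, hs, he, rfl⟩, s, hs, rfl, by rwa [he]⟩
  have hd : Dl 0 (fun p : ℕ × ℕ => (D.taken p.2 ∧ es p.2 = e) ∧ D.cnt e p.2 = p.1) :=
    ((D.dT (by fun_prop)).and (Dl.of_cp (cp_eq (by fun_prop) (by fun_prop)))).and
      (Dl.of_cp (cp_eq (by fun_prop) (by fun_prop)))
  have hc : Dl 0 (fun p : ℕ × ℕ => xs p.2 ∈ D.R e ∩ D.C) :=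
    (Dl.of_cp h).comp (f := fun p : ℕ × ℕ => xs p.2) (by fun_prop)
  refine K_nc (Sg.computable (sg_W (by fun_prop) (by fun_prop)) ?_)
  have : Sg 1 (fun n => ∃ s, ((D.taken s ∧ es s = e) ∧ D.cnt e s = n) ∧ ¬ xs s ∈ D.R e ∩ D.C) :=
    Sg.ex (P := fun n s => ((D.taken s ∧ es s = e) ∧ D.cnt e s = n) ∧ ¬ xs s ∈ D.R e ∩ D.C)
      ((hd.and hc.not).mono (by omega)).1
  refine this.congr fun n => ?_
  constructor
  · rintro ⟨s, ⟨⟨h1, h2⟩, rfl⟩, h3⟩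
    rwa [key s h1 h2] at h3
  · intro hn
    obtain ⟨s, ⟨h1, h2⟩, rfl⟩ := hex n
    exact ⟨s, ⟨⟨h1, h2⟩, rfl⟩, by rwa [key s h1 h2]⟩

end Dat
end Cpt

namespace Cpt
namespace Dat
variable (D : Dat)

theorem exists_bd (f : ℕ → ℕ) (n : ℕ) : ∃ N, ∀ i < n, f i ≤ N :=
  ⟨(Finset.range n).sup f, fun i hi => Finset.le_sup (f := f) (Finset.mem_range.2 hi)⟩

theorem exists_unif_stage {P : ℕ → ℕ → Prop} (n : ℕ) (h : ∀ e < n, ∃ s, ∀ t, s ≤ t → P e t) :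
    ∃ s, ∀ e < n, ∀ t, s ≤ t → P e t := by
  have : ∀ e, ∃ s, e < n → ∀ t, s ≤ t → P e t := by
    intro e
    by_cases he : e < n
    · obtain ⟨s, hs⟩ := h e he
      exact ⟨s, fun _ => hs⟩
    · exact ⟨0, fun h => absurd h he⟩
  choose f hf using this
  obtain ⟨N, hN⟩ := exists_bd f n
  exact ⟨N, fun e he t ht => hf e he t ((hN e he).trans ht)⟩

theorem Cond_mono {e t s u : ℕ} (h : s ≤ u) (hc : D.Cond e t s) : D.Cond e t u := fun y hy ha =>
  (hc y hy ha).imp (D.mZ _ _ _ _ h) (D.mY _ _ _ _ h)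

/-- Totality of requirement `e`. -/
def Tot (e : ℕ) : Prop := ∀ x, (∃ s, D.A x s) → ∃ s, D.Z e x s ∨ D.Y e x s

theorem Tot_cond {e : ℕ} (h : D.Tot e) (t : ℕ) : ∃ s, D.Cond e t s := by
  obtain ⟨s, hs⟩ := exists_unif_stage (P := fun y s => D.A y t → D.Z e y s ∨ D.Y e y s) (t + 1) (by
    intro y _
    by_cases ha : D.A y t
    · obtain ⟨s, hs⟩ := h y ⟨t, ha⟩
      exact ⟨s, fun u hu _ => hs.imp (D.mZ _ _ _ _ hu) (D.mY _ _ _ _ hu)⟩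
    · exact ⟨0, fun _ _ h => absurd h ha⟩)
  exact ⟨s, fun y hy => hs y hy s le_rfl⟩

theorem notTot {e : ℕ} (h : ¬ D.Tot e) : ∃ c, ∀ t s, D.Cond e t s → xs t ≤ c := by
  unfold Tot at h
  push Not at h
  obtain ⟨y, ⟨s0, hs0⟩, hy⟩ := h
  obtain ⟨c, hc⟩ := exists_bd xs (y + s0)
  refine ⟨c, fun t s hcond => hc t ?_⟩
  by_contra hlt
  have := hcond y (by omega) (D.mA _ s0 t (by omega) hs0)
  have h2 := hy s
  tauto

theorem catch_all {e : ℕ} (hfin : (D.R e).Finite) : ∃ c, (∀ x ∈ D.R e, x ≤ c) ∧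
    ∀ x, c < x → (∃ s, D.A x s) → (∃ s, D.Z e x s) → ∃ s, D.taken s ∧ xs s = x := by
  classical
  obtain ⟨c0, hc0⟩ := hfin.bddAbove
  have h1 : ∀ e', ∃ c, D.Tot e' ∨ ∀ t s, D.Cond e' t s → xs t ≤ c := by
    intro e'
    by_cases h : D.Tot e'
    · exact ⟨0, Or.inl h⟩
    · obtain ⟨c, hc⟩ := D.notTot h
      exact ⟨c, Or.inr hc⟩
  choose f hf using h1
  obtain ⟨c1, hc1⟩ := exists_bd f e
  refine ⟨max c0 c1, fun x hx => le_max_of_le_left (hc0 hx), ?_⟩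
  intro x hx hA hZ
  by_contra hnt
  have hex : ∃ e1, (∃ s, D.Z e1 x s) ∧ ∀ y ∈ D.R e1, y < x :=
    ⟨e, hZ, fun y hy => lt_of_le_of_lt (hc0 hy) (lt_of_le_of_lt (le_max_left _ _) hx)⟩
  have hle : Nat.find hex ≤ e := Nat.find_min' hex
    ⟨hZ, fun y hy => lt_of_le_of_lt (hc0 hy) (lt_of_le_of_lt (le_max_left _ _) hx)⟩
  obtain ⟨⟨sz, hsz⟩, hR⟩ := Nat.find_spec hex
  have hmin := fun e' (h : e' < Nat.find hex) => Nat.find_min hex h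
  generalize Nat.find hex = e1 at *
  obtain ⟨sa, hsa⟩ := hA
  obtain ⟨N, hN⟩ := exists_unif_stage (P := fun e' s =>
      ((D.Z e' x s ∨ D.Y e' x s) ∨ ∀ t < s, D.taken t → D.Cond e' t s → xs t < x) ∧
      (D.Z e' x s → ∃ t < s, D.taken t ∧ es t = e' ∧ x ≤ xs t)) e1 (by
    intro e' he'
    have ha : ∃ s, ∀ u, s ≤ u → ((D.Z e' x u ∨ D.Y e' x u) ∨ ∀ t < u, D.taken t → D.Cond e' t u → xs t < x) := by
      rcases hf e' with h | h
      · obtain ⟨s, hs⟩ := h x ⟨sa, hsa⟩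
        exact ⟨s, fun u hu => Or.inl (hs.imp (D.mZ _ _ _ _ hu) (D.mY _ _ _ _ hu))⟩
      · refine ⟨0, fun u _ => Or.inr fun t _ _ hcd => ?_⟩
        have := h t u hcd
        have := hc1 e' (by omega)
        omega
    have hb : ∃ s, ∀ u, s ≤ u → (D.Z e' x u → ∃ t < u, D.taken t ∧ es t = e' ∧ x ≤ xs t) := by
      by_cases hz : ∃ s, D.Z e' x s
      · have := hmin e' he'
        have : ∃ y ∈ D.R e', x ≤ y := by
          by_contra hcon
          push Not at hcon
          exact this ⟨hz, hcon⟩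
        obtain ⟨y, ⟨t, ht, hte, rfl⟩, hxy⟩ := this
        exact ⟨t + 1, fun u hu _ => ⟨t, by omega, ht, hte, hxy⟩⟩
      · exact ⟨0, fun u _ h => absurd ⟨u, h⟩ hz⟩
    obtain ⟨s1, h1⟩ := ha
    obtain ⟨s2, h2⟩ := hb
    exact ⟨max s1 s2, fun u hu => ⟨h1 u (by omega), h2 u (by omega)⟩⟩)
  obtain ⟨s, hs, hxs, hes⟩ := exists_stage x e1 (max N (max sa sz))
  refine hnt ⟨s, (D.taken_iff s).2 ?_, hxs⟩
  refine ⟨?_, ?_, ?_, ?_⟩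
  · rw [hxs]; exact D.mA _ _ _ (by omega) hsa
  · rw [hxs, hes]; exact D.mZ _ _ _ _ (by omega) hsz
  · intro t _ ht
    rw [hxs, hes]
    exact ⟨fun h => hnt ⟨t, ht, h⟩, fun h => hR _ ⟨t, ht, h, rfl⟩⟩
  · rw [hxs, hes]
    exact fun e' he' => hN e' he' s (by omega)

/-- Undecided elements taken by weaker requirements. -/
def G (e : ℕ) : Set ℕ := {x | ∃ s, D.taken s ∧ e < es s ∧ ¬ (D.Z e (xs s) s ∨ D.Y e (xs s) s) ∧ xs s = x}

theorem comp_G {e : ℕ} (h : D.Tot e) : IsComputableSet (D.G e) := by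
  by_cases hfin : {s | D.taken s}.Finite
  · refine comp_of_finite ((hfin.image xs).subset ?_)
    rintro x ⟨s, hs, -, -, rfl⟩
    exact ⟨s, hs, rfl⟩
  have hM : Dl 0 (fun p : ℕ × ℕ => D.taken p.2 ∧ e < es p.2 ∧ ¬ (D.Z e (xs p.2) p.2 ∨ D.Y e (xs p.2) p.2) ∧ xs p.2 = p.1) := by
    refine Dl.and (D.dT (by fun_prop)) (Dl.and ?_ (Dl.and (Dl.not (Dl.or ?_ ?_)) ?_))
    · exact Dl.of_cp (cp_lt (by fun_prop) (by fun_prop))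
    · exact D.dZ (by fun_prop) (by fun_prop) (by fun_prop)
    · exact D.dY (by fun_prop) (by fun_prop) (by fun_prop)
    · exact Dl.of_cp (cp_eq (by fun_prop) (by fun_prop))
  refine Sg.computable (P := fun x => x ∈ D.G e) ?_ ?_
  · exact Sg.ex (P := fun x s => D.taken s ∧ e < es s ∧ ¬ (D.Z e (xs s) s ∨ D.Y e (xs s) s) ∧ xs s = x)
      (hM.mono (by omega)).1
  have : Sg 1 (fun x => ∃ t, ∃ u, D.taken t ∧ x ≤ xs t ∧ t < u ∧ D.Cond e t u ∧
      ∀ s < u, ¬ (D.taken s ∧ e < es s ∧ ¬ (D.Z e (xs s) s ∨ D.Y e (xs s) s) ∧ xs s = x)) := by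
    refine Sg.ex (P := fun x t => ∃ u, D.taken t ∧ x ≤ xs t ∧ t < u ∧ D.Cond e t u ∧
      ∀ s < u, ¬ (D.taken s ∧ e < es s ∧ ¬ (D.Z e (xs s) s ∨ D.Y e (xs s) s) ∧ xs s = x)) ?_
    refine Sg.ex (P := fun (p : ℕ × ℕ) u => D.taken p.2 ∧ p.1 ≤ xs p.2 ∧ p.2 < u ∧ D.Cond e p.2 u ∧
      ∀ s < u, ¬ (D.taken s ∧ e < es s ∧ ¬ (D.Z e (xs s) s ∨ D.Y e (xs s) s) ∧ xs s = p.1)) ?_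
    refine Sg.mono (k := 0) (by omega) (Dl.and (D.dT (by fun_prop)) (Dl.and ?_ (Dl.and ?_ (Dl.and ?_ ?_)))).1
    · exact Dl.of_cp (cp_le (by fun_prop) (by fun_prop))
    · exact Dl.of_cp (cp_lt (by fun_prop) (by fun_prop))
    · exact D.dCond (by fun_prop) (by fun_prop) (by fun_prop)
    · refine Dl.ball (P := fun (p : (ℕ × ℕ) × ℕ) s => ¬ (D.taken s ∧ e < es s ∧ ¬ (D.Z e (xs s) s ∨ D.Y e (xs s) s) ∧ xs s = p.1.1)) (by fun_prop) ?_
      exact (hM.comp (f := fun p : ((ℕ × ℕ) × ℕ) × ℕ => (p.1.1.1, p.2)) (by fun_prop)).not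
  refine this.congr fun x => ?_
  constructor
  · rintro ⟨t, u, ht, hx, htu, hc, hno⟩ ⟨s, hs, hes, hnd, rfl⟩
    have hus : u ≤ s := by
      by_contra hlt
      exact hno s (by omega) ⟨hs, hes, hnd, rfl⟩
    rcases (((D.taken_iff s).1 hs).2.2.2 e hes).1 with h1 | h1
    · exact hnd h1
    · have := h1 t (by omega) ht (D.Cond_mono hus hc)
      omega
  · intro hx
    have hinf : (Set.image xs {s | D.taken s}).Infinite :=
      Set.Infinite.image (fun s hs t ht h => D.taken_inj hs ht h) hfin
    obtain ⟨y, ⟨t, ht, rfl⟩, hy⟩ := hinf.exists_gt x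
    obtain ⟨u, hu⟩ := D.Tot_cond h t
    exact ⟨t, max u (t + 1), ht, hy.le, by omega, D.Cond_mono (by omega) hu, fun s _ hs => hx ⟨s, hs⟩⟩

theorem comp_bU (n : ℕ) : IsComputableSet {x | ∃ e < n, x ∈ D.R e} := by
  induction n with
  | zero =>
    exact comp_of_finite (by simp)
  | succ n ih =>
    refine (cp_or ih (D.comp_R n)).of_eq fun x => ?_
    constructor
    · rintro (⟨e, he, h⟩ | h)
      · exact ⟨e, by omega, h⟩
      · exact ⟨n, by omega, h⟩
    · rintro ⟨e, he, h⟩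
      rcases Nat.lt_succ_iff_lt_or_eq.1 he with h1 | rfl
      · exact Or.inl ⟨e, h1, h⟩
      · exact Or.inr h

theorem main {e : ℕ} (hT : D.Tot e) (hdis : ∀ x s t, D.Z e x s → ¬ D.Y e x t)
    (hZA : ∀ x s, D.Z e x s → ∃ t, D.A x t)
    (hc : IsComputableSet (D.R e ∩ D.C)) : IsComputableSet {x | ∃ s, D.Z e x s} := by
  obtain ⟨c, hcR, hcc⟩ := D.catch_all (D.R_fin hc)
  have hz : Sg 1 (fun x => ∃ s, D.Z e x s) :=
    Sg.ex (P := fun x s => D.Z e x s) ((D.dZ (by fun_prop) (by fun_prop) (by fun_prop)).mono (by omega)).1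
  have hy : Sg 1 (fun x => ∃ s, D.Y e x s) :=
    Sg.ex (P := fun x s => D.Y e x s) ((D.dY (by fun_prop) (by fun_prop) (by fun_prop)).mono (by omega)).1
  refine Sg.computable hz ?_
  have hF : IsComputableSet {x | x ≤ c ∧ ¬ ∃ s, D.Z e x s} :=
    comp_of_finite ((Set.finite_Iic c).subset fun x hx => hx.1)
  have hU : Sg 1 (fun x => ¬ ∃ e' < e + 1, x ∈ D.R e') := Sg.of_cp (D.comp_bU (e + 1)).not
  have : Sg 1 (fun x => x ∈ {x | x ≤ c ∧ ¬ ∃ s, D.Z e x s} ∨ ((c < x ∧ (¬ ∃ e' < e + 1, x ∈ D.R e') ∧ ¬ x ∈ D.G e) ∨ ∃ s, D.Y e x s)) := by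
    refine Sg.or (Sg.of_cp hF) (Sg.or (Sg.and ?_ (Sg.and hU (Sg.of_cp (D.comp_G hT).not))) hy)
    exact Sg.of_cp (cp_lt (by fun_prop) (by fun_prop))
  refine this.congr fun x => ?_
  constructor
  · rintro (h | ⟨h1, h2, h3⟩ | ⟨s, hs⟩) ⟨z, hz⟩
    · exact h.2 ⟨z, hz⟩
    · obtain ⟨s, hs, rfl⟩ := hcc x h1 (hZA x z hz) ⟨z, hz⟩
      by_cases hes : es s < e + 1
      · exact h2 ⟨es s, hes, s, hs, rfl, rfl⟩
      · refine h3 ⟨s, hs, by omega, ?_, rfl⟩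
        rintro (h4 | h4)
        · obtain ⟨t, _, ht, hte, hle⟩ := (((D.taken_iff s).1 hs).2.2.2 e (by omega)).2 h4
          have := hcR _ ⟨t, ht, hte, rfl⟩
          omega
        · exact hdis _ _ _ hz h4
    · exact hdis _ _ _ hz hs
  · intro hx
    by_cases hxc : x ≤ c
    · exact Or.inl ⟨hxc, hx⟩
    by_cases hA : ∃ s, D.A x s
    · obtain ⟨s, hs | hs⟩ := hT x hA
      · exact absurd ⟨s, hs⟩ hx
      · exact Or.inr (Or.inr ⟨s, hs⟩)
    · refine Or.inr (Or.inl ⟨by omega, ?_, ?_⟩)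
      · rintro ⟨e', _, h⟩
        exact hA (D.R_sub_A h)
      · rintro ⟨s, hs, -, -, rfl⟩
        exact hA ⟨s, ((D.taken_iff s).1 hs).1⟩

end Dat
end Cpt

namespace Cpt
variable {α β γ : Type} [Primcodable α] [Primcodable β] [Primcodable γ]

/-- First set of a pair index. -/
def S1 (i : ℕ) : Set ℕ := Wset i.unpair.1
/-- Second set of a pair index. -/
def S2 (i : ℕ) : Set ℕ := Wset i.unpair.2

theorem sg_S1 {f g : α → ℕ} (hf : Computable f) (hg : Computable g) : Sg 1 (fun a => g a ∈ S1 (f a)) :=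
  sg_W (f := fun a => (f a).unpair.1) (by fun_prop) hg
theorem sg_S2 {f g : α → ℕ} (hf : Computable f) (hg : Computable g) : Sg 1 (fun a => g a ∈ S2 (f a)) :=
  sg_W (f := fun a => (f a).unpair.2) (by fun_prop) hg
theorem dl_S1 {f g : α → ℕ} (hf : Computable f) (hg : Computable g) : Dl 2 (fun a => g a ∈ S1 (f a)) :=
  (sg_S1 hf hg).dl
theorem dl_S2 {f g : α → ℕ} (hf : Computable f) (hg : Computable g) : Dl 2 (fun a => g a ∈ S2 (f a)) :=
  (sg_S2 hf hg).dl

/-- `i` is an index of a split of `Wset a`. -/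
def Sp (a i : ℕ) : Prop := ∀ x, ¬ (x ∈ S1 i ∧ x ∈ S2 i) ∧ ((x ∈ S1 i ∨ x ∈ S2 i) ↔ x ∈ Wset a)
/-- `i` is an index of a computable subset of `Wset a`. -/
def Rl (a i : ℕ) : Prop := ∀ x, ¬ (x ∈ S1 i ∧ x ∈ S2 i) ∧ (x ∈ S1 i ∨ x ∈ S2 i) ∧ (x ∈ S1 i → x ∈ Wset a)

theorem pg_Sp (a : ℕ) {f : α → ℕ} (hf : Computable f) : Pg 2 (fun p => Sp a (f p)) := by
  refine Pg.all (P := fun p x => ¬ (x ∈ S1 (f p) ∧ x ∈ S2 (f p)) ∧ ((x ∈ S1 (f p) ∨ x ∈ S2 (f p)) ↔ x ∈ Wset a)) ?_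
  have h1 : Dl 2 (fun p : α × ℕ => p.2 ∈ S1 (f p.1)) := dl_S1 (by fun_prop) (by fun_prop)
  have h2 : Dl 2 (fun p : α × ℕ => p.2 ∈ S2 (f p.1)) := dl_S2 (by fun_prop) (by fun_prop)
  have h3 : Dl 2 (fun p : α × ℕ => p.2 ∈ Wset a) := (sg_W (by fun_prop) (by fun_prop)).dl
  exact ((h1.and h2).not.and ((h1.or h2).iff h3)).2

theorem pg_Rl (a : ℕ) {f : α → ℕ} (hf : Computable f) : Pg 2 (fun p => Rl a (f p)) := by
  refine Pg.all (P := fun p x => ¬ (x ∈ S1 (f p) ∧ x ∈ S2 (f p)) ∧ (x ∈ S1 (f p) ∨ x ∈ S2 (f p)) ∧ (x ∈ S1 (f p) → x ∈ Wset a)) ?_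
  have h1 : Dl 2 (fun p : α × ℕ => p.2 ∈ S1 (f p.1)) := dl_S1 (by fun_prop) (by fun_prop)
  have h2 : Dl 2 (fun p : α × ℕ => p.2 ∈ S2 (f p.1)) := dl_S2 (by fun_prop) (by fun_prop)
  have h3 : Dl 2 (fun p : α × ℕ => p.2 ∈ Wset a) := (sg_W (by fun_prop) (by fun_prop)).dl
  exact ((h1.and h2).not.and ((h1.or h2).and (h1.imp h3))).2

theorem Sp.split {a i : ℕ} (h : Sp a i) : Split (Wset a) (S1 i) := by
  refine ⟨ce_W _, S2 i, ce_W _, ?_, ?_⟩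
  · ext x; simpa using fun h1 h2 => (h x).1 ⟨h1, h2⟩
  · ext x; exact (h x).2

theorem exists_Sp {a : ℕ} {X : Set ℕ} (h : Split (Wset a) X) : ∃ i, Sp a i ∧ S1 i = X := by
  obtain ⟨h1, Y, h2, h3, h4⟩ := h
  obtain ⟨e, rfl⟩ := ce_iff.1 h1
  obtain ⟨b, rfl⟩ := ce_iff.1 h2
  refine ⟨Nat.pair e b, fun x => ?_, by simp [S1]⟩
  simp only [S1, S2, Nat.unpair_pair]
  refine ⟨fun hx => ?_, by rw [← h4]; rfl⟩
  have : x ∈ Wset e ∩ Wset b := hx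
  rw [h3] at this
  exact this

theorem split_W_iff {a e : ℕ} : Split (Wset a) (Wset e) ↔ ∃ b, Sp a (Nat.pair e b) := by
  constructor
  · rintro ⟨h1, Y, h2, h3, h4⟩
    obtain ⟨b, rfl⟩ := ce_iff.1 h2
    refine ⟨b, fun x => ?_⟩
    simp only [S1, S2, Nat.unpair_pair]
    refine ⟨fun hx => ?_, by rw [← h4]; rfl⟩
    have : x ∈ Wset e ∩ Wset b := hx
    rw [h3] at this
    exact this
  · rintro ⟨b, h⟩
    simpa [S1] using h.split

theorem Rl.comp {a i : ℕ} (h : Rl a i) : IsComputableSet (S1 i) := by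
  refine Sg.computable (sg_S1 (by fun_prop) (by fun_prop)) ?_
  refine (sg_S2 (f := fun _ => i) (g := fun x => x) (by fun_prop) (by fun_prop)).congr fun x => ?_
  have := h x
  tauto

theorem exists_Rl {a : ℕ} {X : Set ℕ} (h : IsComputableSet X) (hs : X ⊆ Wset a) : ∃ i, Rl a i ∧ S1 i = X := by
  obtain ⟨e, b, h1, h2⟩ := comp_iff.1 h
  refine ⟨Nat.pair e b, fun x => ?_, by simp [S1, h1]⟩
  simp only [S1, S2, Nat.unpair_pair, h1, h2, Set.mem_compl_iff]
  have := @hs x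
  tauto

theorem ce_inter {X Y : Set ℕ} (hX : CE X) (hY : CE Y) : CE (X ∩ Y) := ce_of_sg ((ce_sg hX).and (ce_sg hY))
theorem ce_union {X Y : Set ℕ} (hX : CE X) (hY : CE Y) : CE (X ∪ Y) := ce_of_sg ((ce_sg hX).or (ce_sg hY))
theorem ce_comp {X : Set ℕ} (h : IsComputableSet X) : CE X := ce_of_sg (Sg.of_cp h)
theorem comp_compl {X : Set ℕ} (h : IsComputableSet X) : IsComputableSet Xᶜ := ComputablePred.not h
theorem comp_inter {X Y : Set ℕ} (hX : IsComputableSet X) (hY : IsComputableSet Y) : IsComputableSet (X ∩ Y) :=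
  cp_and hX hY
theorem comp_union {X Y : Set ℕ} (hX : IsComputableSet X) (hY : IsComputableSet Y) : IsComputableSet (X ∪ Y) :=
  cp_or hX hY

theorem split_union {A X Y : Set ℕ} (hX : Split A X) (hY : Split A Y) : Split A (X ∪ Y) := by
  obtain ⟨h1, X', h2, h3, h4⟩ := hX
  obtain ⟨h1', Y', h2', h3', h4'⟩ := hY
  refine ⟨ce_union h1 h1', X' ∩ Y', ce_inter h2 h2', ?_, ?_⟩
  · ext x
    have e1 := Set.ext_iff.1 h3 x
    have e2 := Set.ext_iff.1 h3' x
    simp at e1 e2 ⊢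
    tauto
  · ext x
    have e1 := Set.ext_iff.1 h3 x
    have e2 := Set.ext_iff.1 h3' x
    have e3 := Set.ext_iff.1 h4 x
    have e4 := Set.ext_iff.1 h4' x
    simp at e1 e2 e3 e4 ⊢
    tauto

theorem split_inter_comp {A T : Set ℕ} (hA : CE A) (hT : IsComputableSet T) : Split A (T ∩ A) := by
  refine ⟨ce_inter (ce_comp hT) hA, Tᶜ ∩ A, ce_inter (ce_comp (comp_compl hT)) hA, ?_, ?_⟩
  · ext x; simp; tauto
  · ext x; simp; tauto

theorem comp_split_inter {A X S : Set ℕ} (hX : Split A X) (hS : IsComputableSet S) (hSA : S ⊆ A) :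
    IsComputableSet (X ∩ S) := by
  obtain ⟨h1, X', h2, h3, h4⟩ := hX
  refine Sg.computable (P := fun x => x ∈ X ∩ S) (ce_sg (ce_inter h1 (ce_comp hS))) ?_
  refine (ce_sg (ce_union (ce_comp (comp_compl hS)) h2)).congr fun x => ?_
  have e1 := Set.ext_iff.1 h3 x
  have e2 := Set.ext_iff.1 h4 x
  have := @hSA x
  simp at e1 e2 ⊢
  tauto

/-- Components of a label. -/
def eF (e : ℕ) : ℕ := e.unpair.1
/-- Second component. -/
def eg (e : ℕ) : ℕ := e.unpair.2
/-- Bound component. -/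
def en (e : ℕ) : ℕ := e.unpair.2.unpair.1.unpair.1
/-- Guess component. -/
def eE (e : ℕ) : ℕ := e.unpair.2.unpair.1.unpair.2
/-- Split component. -/
def ej (e : ℕ) : ℕ := e.unpair.2.unpair.2.unpair.1
/-- Witness component. -/
def eu (e : ℕ) : ℕ := e.unpair.2.unpair.2.unpair.2

@[fun_prop] theorem ceF {f : α → ℕ} (hf : Computable f) : Computable (fun a => eF (f a)) := by
  unfold eF; fun_prop
@[fun_prop] theorem ceg {f : α → ℕ} (hf : Computable f) : Computable (fun a => eg (f a)) := by
  unfold eg; fun_prop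
@[fun_prop] theorem cen {f : α → ℕ} (hf : Computable f) : Computable (fun a => en (f a)) := by
  unfold en; fun_prop
@[fun_prop] theorem ceE {f : α → ℕ} (hf : Computable f) : Computable (fun a => eE (f a)) := by
  unfold eE; fun_prop
@[fun_prop] theorem cej {f : α → ℕ} (hf : Computable f) : Computable (fun a => ej (f a)) := by
  unfold ej; fun_prop
@[fun_prop] theorem ceu {f : α → ℕ} (hf : Computable f) : Computable (fun a => eu (f a)) := by
  unfold eu; fun_prop

/-- Build a label. -/
def mk (F n E j u : ℕ) : ℕ := Nat.pair F (Nat.pair (Nat.pair n E) (Nat.pair j u))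
theorem eF_mk (F n E j u : ℕ) : eF (mk F n E j u) = F := by simp [eF, mk]
theorem eg_mk (F n E j u : ℕ) : eg (mk F n E j u) = (Nat.pair (Nat.pair n E) (Nat.pair j u)) := by simp [eg, mk]
theorem en_mk (F n E j u : ℕ) : en (mk F n E j u) = n := by simp [en, mk]
theorem eE_mk (F n E j u : ℕ) : eE (mk F n E j u) = E := by simp [eE, mk]
theorem ej_mk (F n E j u : ℕ) : ej (mk F n E j u) = j := by simp [ej, mk]
theorem eu_mk (F n E j u : ℕ) : eu (mk F n E j u) = u := by simp [eu, mk]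
theorem eg_eq (e : ℕ) : eg e = Nat.pair (Nat.pair (en e) (eE e)) (Nat.pair (ej e) (eu e)) := by
  simp [eg, en, eE, ej, eu]
theorem mk_eq (e : ℕ) : e = Nat.pair (eF e) (eg e) := by simp [eF, eg]

theorem dl_Wst {f g h : α → ℕ} (hf : Computable f) (hg : Computable g) (hh : Computable h) :
    Dl 0 (fun a => Wst (f a) (g a) (h a)) := Dl.of_cp (cp_Wst hf hg hh)
theorem dl_tb {k : ℕ} {f g : α → ℕ} (hf : Computable f) (hg : Computable g) :
    Dl k (fun a => (f a).testBit (g a) = true) := Dl.of_cp (cp_testBit hf hg)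

/-- The data of the construction. -/
def dat (a0 : ℕ) : Dat where
  A x s := Wst a0 x s
  Z e x s := Wst a0 x s ∧ Wst (ej e).unpair.1 x s ∧
    (∀ i < eE e, (eE e).testBit i = true → Wst i.unpair.2 x s) ∧
    (∀ i < eF e, (eF e).testBit i = true → Wst i.unpair.2 x s)
  Y e x s := Wst (ej e).unpair.2 x s ∨
    (∃ i < eE e, (eE e).testBit i = true ∧ Wst i.unpair.1 x s) ∨
    (∃ i < eF e, (eF e).testBit i = true ∧ Wst i.unpair.1 x s)
  cA := cp_Wst (by fun_prop) (by fun_prop) (by fun_prop)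
  cZ := by
    refine (Dl.and (dl_Wst (by fun_prop) (by fun_prop) (by fun_prop)) (Dl.and (dl_Wst (by fun_prop) (by fun_prop) (by fun_prop)) (Dl.and ?_ ?_))).1
    · refine Dl.ball (P := fun (p : ℕ × ℕ × ℕ) i => (eE p.1).testBit i = true → Wst i.unpair.2 p.2.1 p.2.2) (by fun_prop) ?_
      exact (dl_tb (by fun_prop) (by fun_prop)).imp (dl_Wst (by fun_prop) (by fun_prop) (by fun_prop))
    · refine Dl.ball (P := fun (p : ℕ × ℕ × ℕ) i => (eF p.1).testBit i = true → Wst i.unpair.2 p.2.1 p.2.2) (by fun_prop) ?_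
      exact (dl_tb (by fun_prop) (by fun_prop)).imp (dl_Wst (by fun_prop) (by fun_prop) (by fun_prop))
  cY := by
    refine (Dl.or (dl_Wst (by fun_prop) (by fun_prop) (by fun_prop)) (Dl.or ?_ ?_)).1
    · refine Dl.bex (P := fun (p : ℕ × ℕ × ℕ) i => (eE p.1).testBit i = true ∧ Wst i.unpair.1 p.2.1 p.2.2) (by fun_prop) ?_
      exact (dl_tb (by fun_prop) (by fun_prop)).and (dl_Wst (by fun_prop) (by fun_prop) (by fun_prop))
    · refine Dl.bex (P := fun (p : ℕ × ℕ × ℕ) i => (eF p.1).testBit i = true ∧ Wst i.unpair.1 p.2.1 p.2.2) (by fun_prop) ?_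
      exact (dl_tb (by fun_prop) (by fun_prop)).and (dl_Wst (by fun_prop) (by fun_prop) (by fun_prop))
  mA _ _ _ h := Wst_mono h
  mZ _ _ _ _ h h1 := ⟨Wst_mono h h1.1, Wst_mono h h1.2.1, fun i hi hb => Wst_mono h (h1.2.2.1 i hi hb),
    fun i hi hb => Wst_mono h (h1.2.2.2 i hi hb)⟩
  mY _ _ _ _ h h1 := by
    rcases h1 with h1 | ⟨i, hi, hb, h1⟩ | ⟨i, hi, hb, h1⟩
    · exact Or.inl (Wst_mono h h1)
    · exact Or.inr (Or.inl ⟨i, hi, hb, Wst_mono h h1⟩)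
    · exact Or.inr (Or.inr ⟨i, hi, hb, Wst_mono h h1⟩)

theorem dat_A {a0 x : ℕ} : (∃ s, (dat a0).A x s) ↔ x ∈ Wset a0 := mem_W.symm

theorem unif_W {F x : ℕ} (h : ∀ i, F.testBit i = true → x ∈ S2 i) :
    ∃ s, ∀ i < F, ∀ t, s ≤ t → (F.testBit i = true → Wst i.unpair.2 x t) := by
  refine Dat.exists_unif_stage (P := fun i t => F.testBit i = true → Wst i.unpair.2 x t) F fun i _ => ?_
  by_cases hb : F.testBit i = true
  · obtain ⟨s, hs⟩ := mem_W.1 (h i hb)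
    exact ⟨s, fun t ht _ => Wst_mono ht hs⟩
  · exact ⟨0, fun t _ h => absurd h hb⟩

theorem dat_Z {a0 e x : ℕ} : (∃ s, (dat a0).Z e x s) ↔ x ∈ Wset a0 ∧ x ∈ S1 (ej e) ∧
    (∀ i, (eE e).testBit i = true → x ∈ S2 i) ∧ (∀ i, (eF e).testBit i = true → x ∈ S2 i) := by
  constructor
  · rintro ⟨s, h1, h2, h3, h4⟩
    exact ⟨mem_W.2 ⟨s, h1⟩, mem_W.2 ⟨s, h2⟩, fun i hi => mem_W.2 ⟨s, h3 i (testBit_lt' hi) hi⟩,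
      fun i hi => mem_W.2 ⟨s, h4 i (testBit_lt' hi) hi⟩⟩
  · rintro ⟨h1, h2, h3, h4⟩
    obtain ⟨s1, h1⟩ := mem_W.1 h1
    obtain ⟨s2, h2⟩ := mem_W.1 h2
    obtain ⟨s3, h3⟩ := unif_W h3
    obtain ⟨s4, h4⟩ := unif_W h4
    exact ⟨max (max s1 s2) (max s3 s4), Wst_mono (by omega) h1, Wst_mono (by omega) h2,
      fun i hi => h3 i hi _ (by omega), fun i hi => h4 i hi _ (by omega)⟩

theorem dat_Y {a0 e x : ℕ} : (∃ s, (dat a0).Y e x s) ↔ x ∈ S2 (ej e) ∨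
    (∃ i, (eE e).testBit i = true ∧ x ∈ S1 i) ∨ (∃ i, (eF e).testBit i = true ∧ x ∈ S1 i) := by
  constructor
  · rintro ⟨s, h | ⟨i, -, hb, h⟩ | ⟨i, -, hb, h⟩⟩
    · exact Or.inl (mem_W.2 ⟨s, h⟩)
    · exact Or.inr (Or.inl ⟨i, hb, mem_W.2 ⟨s, h⟩⟩)
    · exact Or.inr (Or.inr ⟨i, hb, mem_W.2 ⟨s, h⟩⟩)
  · rintro (h | ⟨i, hb, h⟩ | ⟨i, hb, h⟩)
    · obtain ⟨s, h⟩ := mem_W.1 h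
      exact ⟨s, Or.inl h⟩
    · obtain ⟨s, h⟩ := mem_W.1 h
      exact ⟨s, Or.inr (Or.inl ⟨i, testBit_lt' hb, hb, h⟩)⟩
    · obtain ⟨s, h⟩ := mem_W.1 h
      exact ⟨s, Or.inr (Or.inr ⟨i, testBit_lt' hb, hb, h⟩)⟩

theorem label_comp {a0 e : ℕ} (hj : Sp a0 (ej e)) (hE : ∀ i, (eE e).testBit i = true → Sp a0 i)
    (hF : ∀ i, (eF e).testBit i = true → Rl a0 i)
    (hc : IsComputableSet ((dat a0).R e ∩ (dat a0).C)) :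
    IsComputableSet {x | x ∈ Wset a0 ∧ x ∈ S1 (ej e) ∧
    (∀ i, (eE e).testBit i = true → x ∈ S2 i) ∧ (∀ i, (eF e).testBit i = true → x ∈ S2 i)} := by
  have := (dat a0).main (e := e) ?_ ?_ ?_ hc
  · refine ComputablePred.of_eq this fun x => ?_
    exact dat_Z
  · intro x hx
    rw [dat_A] at hx
    rw [exists_or, dat_Z, dat_Y]
    by_contra hcon
    push Not at hcon
    obtain ⟨h1, h2, h3, h4⟩ := hcon
    have hx1 : x ∈ S1 (ej e) := (((hj x).2).2 hx).resolve_right h2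
    have hx2 : ∀ i, (eE e).testBit i = true → x ∈ S2 i := fun i hi =>
      (((hE i hi x).2).2 hx).resolve_left (h3 i hi)
    obtain ⟨i, hi, hi2⟩ := h1 hx hx1 hx2
    rcases (hF i hi x).2.1 with h | h
    · exact h4 i hi h
    · exact hi2 h
  · intro x s t hz hy
    obtain ⟨h1, h2, h3, h4⟩ := dat_Z.1 ⟨s, hz⟩
    rcases dat_Y.1 ⟨t, hy⟩ with h | ⟨i, hb, h⟩ | ⟨i, hb, h⟩
    · exact (hj x).1 ⟨h2, h⟩
    · exact (hE i hb x).1 ⟨h, h3 i hb⟩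
    · exact (hF i hb x).1 ⟨h, h4 i hb⟩
  · intro x s hz
    exact ⟨s, hz.1⟩

end Cpt

namespace Cpt
variable {α β γ : Type} [Primcodable α] [Primcodable β] [Primcodable γ]

/-- Bound for good labels with small second component. -/
def Bd (p : ℕ) : ℕ := Nat.pair (2 ^ p) p
@[fun_prop] theorem cBd {f : α → ℕ} (hf : Computable f) : Computable (fun a => Bd (f a)) := by
  unfold Bd; fun_prop

/-- The covering condition. -/
def Cov (a0 : ℕ) (d p x : ℕ) : Prop :=
  (∃ e < d, d.testBit e = true ∧ x ∈ (dat a0).R e) ∨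
  ∃ q < p, p.testBit q = true ∧ x ∈ S1 q ∧ ¬ ∃ e < Bd q, x ∈ (dat a0).R e

theorem dl_R (D : Dat) {f g : α → ℕ} (hf : Computable f) (hg : Computable g) : Dl 2 (fun a => g a ∈ D.R (f a)) :=
  (D.sg_R hf hg).dl

theorem dl_Cov (a0 : ℕ) {d p x : α → ℕ} (hd : Computable d) (hp : Computable p) (hx : Computable x) :
    Dl 2 (fun a => Cov a0 (d a) (p a) (x a)) := by
  unfold Cov
  refine Dl.or ?_ ?_
  · refine Dl.bex (P := fun a e => (d a).testBit e = true ∧ x a ∈ (dat a0).R e) (by fun_prop) ?_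
    exact (dl_tb (by fun_prop) (by fun_prop)).and (dl_R _ (by fun_prop) (by fun_prop))
  · refine Dl.bex (P := fun a q => (p a).testBit q = true ∧ x a ∈ S1 q ∧ ¬ ∃ e < Bd q, x a ∈ (dat a0).R e) (by fun_prop) ?_
    refine (dl_tb (by fun_prop) (by fun_prop)).and ((dl_S1 (by fun_prop) (by fun_prop)).and (Dl.not ?_))
    refine Dl.bex (P := fun (a : α × ℕ) e => x a.1 ∈ (dat a0).R e) (by fun_prop) ?_
    exact dl_R _ (by fun_prop) (by fun_prop)

/-- The ideal on the constructed set. -/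
def JJ (a0 c0 : ℕ) (Good : ℕ → Prop) : Set (Set ℕ) :=
  {Y | Split (Wset c0) Y ∧ ∃ t d p, Rl c0 t ∧ (∀ e < d, d.testBit e = true → ¬ Good e) ∧
    (∀ q < p, p.testBit q = true → Rl a0 q) ∧ ∀ x, x ∈ Y → x ∈ S1 t ∨ Cov a0 d p x}

theorem sg_JJ {m : ℕ} (hm : 2 ≤ m) (a0 c0 : ℕ) {Good : ℕ → Prop} (hG : Pg (m + 1) Good) :
    Sg (m + 1) (fun e => Wset e ∈ JJ a0 c0 Good) := by
  have h1 : Sg (m + 1) (fun e => Split (Wset c0) (Wset e)) := by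
    refine Sg.congr (P := fun e => ∃ b, Sp c0 (Nat.pair e b)) ?_ fun e => split_W_iff.symm
    refine Sg.ex (P := fun e b => Sp c0 (Nat.pair e b)) ?_
    exact ((pg_Sp c0 (f := fun p : ℕ × ℕ => Nat.pair p.1 p.2) (by fun_prop)).dl.mono (by omega)).1
  refine h1.and ?_
  refine Sg.ex (P := fun e t => ∃ d p, Rl c0 t ∧ (∀ e < d, d.testBit e = true → ¬ Good e) ∧
    (∀ q < p, p.testBit q = true → Rl a0 q) ∧ ∀ x, x ∈ Wset e → x ∈ S1 t ∨ Cov a0 d p x) ?_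
  refine Sg.ex (P := fun (et : ℕ × ℕ) d => ∃ p, Rl c0 et.2 ∧ (∀ e < d, d.testBit e = true → ¬ Good e) ∧
    (∀ q < p, p.testBit q = true → Rl a0 q) ∧ ∀ x, x ∈ Wset et.1 → x ∈ S1 et.2 ∨ Cov a0 d p x) ?_
  refine Sg.ex (P := fun (etd : (ℕ × ℕ) × ℕ) p => Rl c0 etd.1.2 ∧ (∀ e < etd.2, etd.2.testBit e = true → ¬ Good e) ∧
    (∀ q < p, p.testBit q = true → Rl a0 q) ∧ ∀ x, x ∈ Wset etd.1.1 → x ∈ S1 etd.1.2 ∨ Cov a0 etd.2 p x) ?_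
  refine Sg.and ?_ (Sg.and ?_ (Sg.and ?_ ?_))
  · exact ((pg_Rl c0 (by fun_prop)).dl.mono (by omega)).1
  · refine Sg.ball (P := fun (w : ((ℕ × ℕ) × ℕ) × ℕ) e => w.1.2.testBit e = true → ¬ Good e) (by fun_prop) ?_
    exact Sg.imp (dl_tb (by fun_prop) (by fun_prop)).2 (Sg.comp (P := fun e => ¬ Good e) (f := fun w : (((ℕ × ℕ) × ℕ) × ℕ) × ℕ => w.2) hG.not (by fun_prop))
  · refine Sg.ball (P := fun (w : ((ℕ × ℕ) × ℕ) × ℕ) q => w.2.testBit q = true → Rl a0 q) (by fun_prop) ?_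
    exact Sg.imp (dl_tb (by fun_prop) (by fun_prop)).2 ((pg_Rl a0 (by fun_prop)).dl.mono (by omega)).1
  · have : Pg 2 (fun w : ((ℕ × ℕ) × ℕ) × ℕ => ∀ x, x ∈ Wset w.1.1.1 → x ∈ S1 w.1.1.2 ∨ Cov a0 w.1.2 w.2 x) := by
      refine Pg.all (P := fun (w : ((ℕ × ℕ) × ℕ) × ℕ) x => x ∈ Wset w.1.1.1 → x ∈ S1 w.1.1.2 ∨ Cov a0 w.1.2 w.2 x) ?_
      exact (Dl.imp (sg_W (by fun_prop) (by fun_prop)).dl (Dl.or (dl_S1 (by fun_prop) (by fun_prop))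
        (dl_Cov a0 (by fun_prop) (by fun_prop) (by fun_prop)))).2
    exact (this.dl.mono (by omega)).1

theorem or_bit {d d' q : ℕ} : (d ||| d').testBit q = true ↔ d.testBit q = true ∨ d'.testBit q = true := by
  simp [Nat.testBit_or]

theorem acc_JJ {m : ℕ} (hm : 2 ≤ m) (a0 c0 : ℕ) {Good : ℕ → Prop} (hG : Pg (m + 1) Good) :
    Acceptable (m + 1) (Wset c0) (JJ a0 c0 Good) := by
  have hcomp : ∀ R : Set ℕ, IsComputableSet R → R ⊆ Wset c0 → R ∈ JJ a0 c0 Good := by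
    intro R hR hs
    obtain ⟨t, ht, rfl⟩ := exists_Rl hR hs
    refine ⟨?_, t, 0, 0, ht, by simp, by simp, fun x hx => Or.inl hx⟩
    have := split_inter_comp (ce_W c0) hR
    rwa [Set.inter_eq_left.2 hs] at this
  refine ⟨⟨fun X hX => hX.1, ⟨∅, hcomp _ (comp_of_finite Set.finite_empty) (by simp)⟩, ?_, ?_⟩, hcomp, ?_⟩
  · rintro X ⟨hX, t, d, p, h1, h2, h3, h4⟩ Y ⟨hY, t', d', p', h1', h2', h3', h4'⟩
    refine ⟨split_union hX hY, ?_⟩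
    obtain ⟨t'', ht'', hS⟩ := exists_Rl (a := c0) (X := S1 t ∪ S1 t') (comp_union h1.comp h1'.comp) (by
      rintro x (hx | hx)
      · exact (h1 x).2.2 hx
      · exact (h1' x).2.2 hx)
    refine ⟨t'', d ||| d', p ||| p', ht'', ?_, ?_, ?_⟩
    · intro e _ he
      rcases or_bit.1 he with h | h
      · exact h2 e (testBit_lt' h) h
      · exact h2' e (testBit_lt' h) h
    · intro e _ he
      rcases or_bit.1 he with h | h
      · exact h3 e (testBit_lt' h) h
      · exact h3' e (testBit_lt' h) h
    · have hmono : ∀ {d p d' p' x}, (∀ q, d.testBit q = true → d'.testBit q = true) →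
          (∀ q, p.testBit q = true → p'.testBit q = true) → Cov a0 d p x → Cov a0 d' p' x := by
        rintro d p d' p' x hd hp (⟨e, _, hb, he⟩ | ⟨q, _, hb, he⟩)
        · exact Or.inl ⟨e, testBit_lt' (hd e hb), hd e hb, he⟩
        · exact Or.inr ⟨q, testBit_lt' (hp q hb), hp q hb, he⟩
      rintro x (hx | hx)
      · rcases h4 x hx with h | h
        · exact Or.inl (by rw [hS]; exact Or.inl h)
        · exact Or.inr (hmono (fun q hq => or_bit.2 (Or.inl hq)) (fun q hq => or_bit.2 (Or.inl hq)) h)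
      · rcases h4' x hx with h | h
        · exact Or.inl (by rw [hS]; exact Or.inr h)
        · exact Or.inr (hmono (fun q hq => or_bit.2 (Or.inr hq)) (fun q hq => or_bit.2 (Or.inr hq)) h)
  · rintro X ⟨hX, t, d, p, h1, h2, h3, h4⟩ Y hY hs
    exact ⟨hY, t, d, p, h1, h2, h3, fun x hx => h4 x (hs hx)⟩
  · exact (sigmaK_iff _ _).2 (sg_JJ hm a0 c0 hG)

/-- Good labels. -/
def Good (a0 : ℕ) (L : ℕ × ℕ → ℕ → Prop) (e : ℕ) : Prop :=
  (∀ q, (eF e).testBit q = true ↔ q < eg e ∧ Rl a0 q) ∧ (∀ i < eE e, (eE e).testBit i = true → i < en e) ∧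
  ej e < en e ∧ L (en e, eE e) (eu e)

theorem pg_Good {m : ℕ} (hm : 2 ≤ m) (a0 : ℕ) {L : ℕ × ℕ → ℕ → Prop}
    (hL : Pg (m + 1) (fun p : (ℕ × ℕ) × ℕ => L p.1 p.2)) : Pg (m + 1) (Good a0 L) := by
  unfold Good
  refine Pg.and ?_ (Pg.and ?_ (Pg.and ?_ ?_))
  · refine Pg.mono (k := 3) (by omega) (Pg.all (P := fun e q => ((eF e).testBit q = true ↔ q < eg e ∧ Rl a0 q)) ?_)
    exact (Dl.iff (dl_tb (by fun_prop) (by fun_prop)) (Dl.and (Dl.of_cp (cp_lt (by fun_prop) (by fun_prop)))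
      (pg_Rl a0 (by fun_prop)).dl)).2
  · refine Pg.ball (P := fun e i => ((eE e).testBit i = true → i < en e)) (by fun_prop) ?_
    exact (Dl.imp (dl_tb (by fun_prop) (by fun_prop)) (Dl.of_cp (cp_lt (by fun_prop) (by fun_prop)))).2
  · exact Pg.of_cp (cp_lt (by fun_prop) (by fun_prop))
  · exact hL.comp (f := fun e => ((en e, eE e), eu e)) (by fun_prop)

theorem lt_pow {F n : ℕ} (h : ∀ q, F.testBit q = true → q < n) : F < 2 ^ n := by
  refine Nat.lt_pow_two_of_testBit F fun i hi => ?_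
  by_contra hc
  have := h i (by simpa using hc)
  omega

theorem good_large {a0 : ℕ} {L : ℕ × ℕ → ℕ → Prop} {e p : ℕ} (h : Good a0 L e) (hp : Bd p ≤ e) : p < eg e := by
  by_contra hc
  push Not at hc
  have h1 : eF e < 2 ^ p := lt_of_lt_of_le (lt_pow fun q hq => ((h.1 q).1 hq).1) (Nat.pow_le_pow_right (by omega) hc)
  have h2 : e < Bd p := by
    conv_lhs => rw [mk_eq e]
    refine lt_of_lt_of_le (Nat.pair_lt_pair_left _ h1) ?_
    unfold Bd
    rcases Nat.lt_or_ge (eg e) p with h | h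
    · exact (Nat.pair_lt_pair_right _ h).le
    · rw [le_antisymm hc h]
  omega

theorem good_fin {a0 : ℕ} {L : ℕ × ℕ → ℕ → Prop} (hL : ∀ a u v, L a u → L a v → u = v) (N : ℕ) :
    {e | Good a0 L e ∧ en e ≤ N}.Finite := by
  have hfin : (Set.Iic N ×ˢ (Set.Iic (2 ^ N) ×ˢ Set.Iic N) : Set (ℕ × ℕ × ℕ)).Finite :=
    (Set.finite_Iic N).prod ((Set.finite_Iic _).prod (Set.finite_Iic N))
  refine Set.Finite.of_finite_image (f := fun e => (en e, eE e, ej e)) (hfin.subset ?_) ?_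
  · rintro _ ⟨e, ⟨h, hN⟩, rfl⟩
    refine ⟨hN, ?_, ?_⟩
    · have : eE e < 2 ^ en e := lt_pow fun q hq => h.2.1 q (testBit_lt' hq) hq
      exact this.le.trans (Nat.pow_le_pow_right (by omega) hN)
    · have := h.2.2.1
      simp only [Set.mem_Iic]; omega
  · rintro e ⟨h, -⟩ e' ⟨h', -⟩ heq
    simp only [Prod.mk.injEq] at heq
    obtain ⟨h1, h2, h3⟩ := heq
    have h4 : eu e = eu e' := hL _ _ _ h.2.2.2 (by rw [h1, h2]; exact h'.2.2.2)
    have h5 : eg e = eg e' := by rw [eg_eq, eg_eq e', h1, h2, h3, h4]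
    have h6 : eF e = eF e' := by
      refine Nat.eq_of_testBit_eq fun q => ?_
      rw [Bool.eq_iff_iff, h.1, h'.1, h5]
    rw [mk_eq e, mk_eq e', h5, h6]

theorem comp_fU (D : Dat) {K : Set ℕ} (h : K.Finite) : IsComputableSet {x | ∃ e ∈ K, x ∈ D.R e} := by
  induction K, h using Set.Finite.induction_on with
  | empty => exact comp_of_finite (by simp)
  | @insert a s _ _ ih =>
    refine (cp_or ih (D.comp_R a)).of_eq fun x => ?_
    simp [or_comm]

theorem ideal_bU {A : Set ℕ} {I : Set (Set ℕ)} (hI : IdealOfSplits A I) (h0 : ∅ ∈ I) (K : ℕ → Prop)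
    (h : ∀ i, K i → S1 i ∈ I) (n : ℕ) : {x | ∃ i < n, K i ∧ x ∈ S1 i} ∈ I := by
  induction n with
  | zero => simpa using h0
  | succ n ih =>
    by_cases hn : K n
    · have := hI.2.2.1 _ ih _ (h n hn)
      convert this using 1
      ext x
      constructor
      · rintro ⟨i, hi, hk, hx⟩
        rcases Nat.lt_succ_iff_lt_or_eq.1 hi with h1 | rfl
        · exact Or.inl ⟨i, h1, hk, hx⟩
        · exact Or.inr hx
      · rintro (⟨i, hi, hk, hx⟩ | hx)
        · exact ⟨i, by omega, hk, hx⟩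
        · exact ⟨n, by omega, hn, hx⟩
    · convert ih using 1
      ext x
      constructor
      · rintro ⟨i, hi, hk, hx⟩
        rcases Nat.lt_succ_iff_lt_or_eq.1 hi with h1 | rfl
        · exact ⟨i, h1, hk, hx⟩
        · exact absurd hk hn
      · rintro ⟨i, hi, hk, hx⟩
        exact ⟨i, by omega, hk, hx⟩

end Cpt

open Cpt in
/-- If `A` is c.e. and non-computable, `m ≥ 2` and `I` is an
`(m+3)`-acceptable ideal of `B(A)`, then there are a non-computable c.e. set
`C ⊆ A` and an `(m+1)`-acceptable ideal `J` of `B(C)` such that for every split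
`X ⊑ A`: `X ∈ I` iff there is a computable `R ⊆ A` such that for every computable
`S ⊆ A ∖ R`, `X ∩ S ∩ C ∈ J`. -/
theorem stmt14 (A : Set ℕ) (hA : CE A) (hAnc : ¬ IsComputableSet A)
    (m : ℕ) (hm : 2 ≤ m) (I : Set (Set ℕ)) (hI : Acceptable (m + 3) A I) :
    ∃ C : Set ℕ, CE C ∧ C ⊆ A ∧ ¬ IsComputableSet C ∧
      ∃ J : Set (Set ℕ), Acceptable (m + 1) C J ∧
        ∀ X : Set ℕ, Split A X →
          (X ∈ I ↔ ∃ R : Set ℕ, IsComputableSet R ∧ R ⊆ A ∧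
            ∀ S : Set ℕ, IsComputableSet S → S ⊆ A \ R → X ∩ S ∩ C ∈ J) := by
  obtain ⟨a0, rfl⟩ := ce_iff.1 hA
  obtain ⟨hId, hRI, hSg⟩ := hI
  have h0 : (∅ : Set ℕ) ∈ I := hRI _ (comp_of_finite Set.finite_empty) (by simp)
  have hSgI : Sg (m + 3) (fun i => Sp a0 i ∧ S1 i ∈ I) := by
    refine Sg.and ((pg_Sp a0 (by fun_prop)).dl.mono (by omega)).1 ?_
    exact ((sigmaK_iff _ _).1 hSg).comp (f := fun i : ℕ => i.unpair.1) (by fun_prop)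
  obtain ⟨Q, hQ, hIQ⟩ := hSgI
  have hH : Sg (m + 2) (fun p : ℕ × ℕ => ∀ j < p.1, ∀ r < p.1, p.2.testBit j = true ∨ Q (j, r)) := by
    refine Sg.ball (P := fun (p : ℕ × ℕ) j => ∀ r < p.1, p.2.testBit j = true ∨ Q (j, r)) (by fun_prop) ?_
    refine Sg.ball (P := fun (p : (ℕ × ℕ) × ℕ) r => p.1.2.testBit p.2 = true ∨ Q (p.2, r)) (by fun_prop) ?_
    exact Sg.or (dl_tb (by fun_prop) (by fun_prop)).1
      (Sg.comp (P := Q) (f := fun p : ((ℕ × ℕ) × ℕ) × ℕ => (p.1.2, p.2)) hQ (by fun_prop))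
  obtain ⟨L, hLp, hLH, hLu⟩ := unif hH
  have hGp := pg_Good hm a0 hLp
  obtain ⟨c0, hc0⟩ := ce_iff.1 (dat a0).ce_C
  have hCA : (dat a0).C ⊆ Wset a0 := by
    intro x hx
    obtain ⟨e, he⟩ := (dat a0).C_sub hx
    exact dat_A.1 ((dat a0).R_sub_A he)
  have hRA : ∀ e, (dat a0).R e ⊆ Wset a0 := fun e x hx => dat_A.1 ((dat a0).R_sub_A hx)
  refine ⟨(dat a0).C, (dat a0).ce_C, hCA, ?_, JJ a0 c0 (Good a0 L), ?_, ?_⟩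
  · intro hC
    obtain ⟨b, hb⟩ := ce_iff.1 (ce_comp (comp_of_finite (X := ∅) Set.finite_empty))
    have := label_comp (a0 := a0) (e := Cpt.mk 0 0 0 (Nat.pair a0 b) 0) (by
      rw [ej_mk]
      intro x
      simp [S1, S2, hb]) (by simp [eE_mk]) (by simp [eF_mk]) (comp_inter ((dat a0).comp_R _) hC)
    refine hAnc (ComputablePred.of_eq this fun x => ?_)
    simp [eE_mk, eF_mk, ej_mk, S1]
  · rw [← hc0]
    exact acc_JJ hm a0 c0 hGp
  intro X hX
  constructor
  · intro hXI
    obtain ⟨i, hi, rfl⟩ := exists_Sp hX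
    obtain ⟨r, hr⟩ := (hIQ i).1 ⟨hi, hXI⟩
    have hK : {e | Good a0 L e ∧ ¬ (eE e).testBit i = true}.Finite := by
      refine (good_fin (a0 := a0) hLu (max i r)).subset ?_
      rintro e ⟨he, hb⟩
      refine ⟨he, ?_⟩
      by_contra hc
      push Not at hc
      rcases (hLH _).2 ⟨_, he.2.2.2⟩ i (by simp only; omega) r (by simp only; omega) with h | h
      · exact hb h
      · exact hr h
    refine ⟨{x | ∃ e ∈ {e | Good a0 L e ∧ ¬ (eE e).testBit i = true}, x ∈ (dat a0).R e},
      comp_fU (dat a0) hK, ?_, ?_⟩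
    · rintro x ⟨e, -, hx⟩
      exact hRA e hx
    · intro S hS hSs
      have hSA : S ⊆ Wset a0 := fun x hx => (hSs hx).1
      have hXS := comp_split_inter hX hS hSA
      refine ⟨by rw [hc0]; exact split_inter_comp (dat a0).ce_C hXS, ?_⟩
      obtain ⟨p, hp, rfl⟩ := exists_Rl hS hSA
      obtain ⟨t, ht, htS⟩ := exists_Rl (a := c0) (X := ∅) (comp_of_finite Set.finite_empty) (by simp)
      obtain ⟨d, hd⟩ := exists_mask (Bd p) (fun e => ¬ Good a0 L e)
      obtain ⟨P, hP⟩ := exists_mask (p + 1) (fun q => q = p)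
      refine ⟨t, d, P, ht, fun e _ he => ((hd e).1 he).2, fun q _ hq => by rw [((hP q).1 hq).2]; exact hp, ?_⟩
      rintro x ⟨⟨hxX, hxS⟩, hxC⟩
      refine Or.inr ?_
      have hPp : P.testBit p = true := (hP p).2 ⟨by omega, rfl⟩
      by_cases hex : ∃ e < Bd p, x ∈ (dat a0).R e
      · obtain ⟨e, he, hxe⟩ := hex
        have hng : ¬ Good a0 L e := by
          intro hg
          by_cases hb : (eE e).testBit i = true
          · exact (hi x).1 ⟨hxX, (dat_Z.1 ((dat a0).R_sub_Z hxe)).2.2.1 i hb⟩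
          · exact (hSs hxS).2 ⟨e, ⟨hg, hb⟩, hxe⟩
        have := (hd e).2 ⟨he, hng⟩
        exact Or.inl ⟨e, testBit_lt' this, this, hxe⟩
      · exact Or.inr ⟨p, testBit_lt' hPp, hPp, hxS, hex⟩
  · rintro ⟨R, hR, hRs, hall⟩
    by_contra hXI
    obtain ⟨j, hj, rfl⟩ := exists_Sp hX
    obtain ⟨q, hq, rfl⟩ := exists_Rl hR hRs
    obtain ⟨E, hE⟩ := exists_mask (max j q + 1) (fun i => Sp a0 i ∧ S1 i ∈ I)
    obtain ⟨u, hu⟩ := (hLH (max j q + 1, E)).1 (by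
      intro j' hj' r hr
      by_cases h : Sp a0 j' ∧ S1 j' ∈ I
      · exact Or.inl ((hE j').2 ⟨hj', h⟩)
      · refine Or.inr ?_
        by_contra hn
        exact h ((hIQ j').2 ⟨r, hn⟩))
    obtain ⟨F, hF⟩ := exists_mask (Nat.pair (Nat.pair (max j q + 1) E) (Nat.pair j u)) (fun q => Rl a0 q)
    obtain ⟨e, he⟩ : ∃ e, e = Cpt.mk F (max j q + 1) E j u := ⟨_, rfl⟩
    have e1 : eF e = F := by rw [he, eF_mk]
    have e2 : eg e = Nat.pair (Nat.pair (max j q + 1) E) (Nat.pair j u) := by rw [he, eg_mk]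
    have e3 : en e = max j q + 1 := by rw [he, en_mk]
    have e4 : eE e = E := by rw [he, eE_mk]
    have e5 : ej e = j := by rw [he, ej_mk]
    have e6 : eu e = u := by rw [he, eu_mk]
    have hg : Good a0 L e := by
      refine ⟨?_, ?_, ?_, ?_⟩
      · rw [e1, e2]; exact hF
      · rw [e3, e4]; exact fun i _ hi => ((hE i).1 hi).1
      · rw [e3, e5]; omega
      · rw [e3, e4, e6]; exact hu
    have hqF : F.testBit q = true := by
      refine (hF q).2 ⟨?_, hq⟩
      have h1 := Nat.left_le_pair (Nat.pair (max j q + 1) E) (Nat.pair j u)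
      have h2 := Nat.left_le_pair (max j q + 1) E
      omega
    have hZ : ∀ x ∈ (dat a0).R e, x ∈ Wset a0 ∧ x ∈ S1 j ∧
        (∀ i, E.testBit i = true → x ∈ S2 i) ∧ (∀ i, F.testBit i = true → x ∈ S2 i) := by
      intro x hx
      have := dat_Z.1 ((dat a0).R_sub_Z hx)
      rwa [e1, e4, e5] at this
    obtain ⟨-, t, d, p, ht, hd, hp, hcov⟩ := hall ((dat a0).R e) ((dat a0).comp_R e) (by
      intro x hx
      obtain ⟨h1, h2, h3, h4⟩ := hZ x hx
      exact ⟨h1, fun h => (hq x).1 ⟨h, h4 q hqF⟩⟩)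
    have hsub : (dat a0).R e ∩ (dat a0).C = (dat a0).R e ∩ S1 t := by
      ext x
      constructor
      · rintro ⟨hx, hxC⟩
        refine ⟨hx, ?_⟩
        rcases hcov x ⟨⟨(hZ x hx).2.1, hx⟩, hxC⟩ with h | ⟨e', _, hb, h⟩ | ⟨p', _, hb, h, h'⟩
        · exact h
        · have := (dat a0).R_disj hx h
          subst this
          exact absurd hg (hd e (testBit_lt' hb) hb)
        · exfalso
          have hlt : Bd p' ≤ e := by
            by_contra hc
            exact h' ⟨e, by omega, hx⟩
          have h7 := good_large hg hlt
          have hpr := hp p' (testBit_lt' hb) hb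
          have h8 : F.testBit p' = true := by
            rw [← e1]; exact (hg.1 p').2 ⟨h7, hpr⟩
          exact (hpr x).1 ⟨h, (hZ x hx).2.2.2 p' h8⟩
      · rintro ⟨hx, hxt⟩
        exact ⟨hx, by rw [← hc0]; exact (ht x).2.2 hxt⟩
    have hZc := label_comp (a0 := a0) (e := e) (by rw [e5]; exact hj)
      (by rw [e4]; exact fun i hi => ((hE i).1 hi).2.1) (by rw [e1]; exact fun i hi => ((hF i).1 hi).2)
      (by rw [hsub]; exact comp_inter ((dat a0).comp_R e) ht.comp)
    rw [e1, e4, e5] at hZc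
    have hZI := hRI _ hZc (fun x hx => hx.1)
    have hEI := ideal_bU hId h0 (fun i => E.testBit i = true) (fun i hi => ((hE i).1 hi).2.2) E
    have hFI := ideal_bU hId h0 (fun i => F.testBit i = true)
      (fun i hi => hRI _ ((hF i).1 hi).2.comp (fun x hx => (((hF i).1 hi).2 x).2.2 hx)) F
    refine hXI (hId.2.2.2 _ (hId.2.2.1 _ hZI _ (hId.2.2.1 _ hEI _ hFI)) _ hX ?_)
    intro x hx
    have hxA : x ∈ Wset a0 := (hj x).2.1 (Or.inl hx)
    by_cases h1 : ∃ i, E.testBit i = true ∧ x ∈ S1 i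
    · obtain ⟨i, hb, h⟩ := h1
      exact Or.inr (Or.inl ⟨i, testBit_lt' hb, hb, h⟩)
    by_cases h2 : ∃ i, F.testBit i = true ∧ x ∈ S1 i
    · obtain ⟨i, hb, h⟩ := h2
      exact Or.inr (Or.inr ⟨i, testBit_lt' hb, hb, h⟩)
    refine Or.inl ⟨hxA, hx, fun i hi => ?_, fun i hi => ?_⟩
    · exact ((((hE i).1 hi).2.1 x).2.2 hxA).resolve_left fun h => h1 ⟨i, hi, h⟩
    · exact ((((hF i).1 hi).2 x).2.1).resolve_left fun h => h2 ⟨i, hi, h⟩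
end

section
/- Let D ⊆ ℕ be c.e. Suppose there is a c.e. set W with D ⊆ W such that (ℕ ∖ W) ∪ D is not c.e. (equivalently, the lattice of c.e. supersets of D is not a boolean algebra). Then there exist c.e. sets D̃ and Ã with D ⊆ D̃ ⊆ Ã and D̃ ⊂ₘ Ã. -/
namespace MajorAux

open Classical in
/-- Right end of the interval watched by the block with left end `k`, at stage `s`. -/
noncomputable def rr (U : ℕ → ℕ → ℕ → Prop) (w d k : ℕ) : ℕ → ℕ
  | 0 => 0
  | s + 1 =>
    if ∃ x < rr U w d k s, (k ≤ x ∧ U w s x ∧ ¬ U w (rr U w d k s) x ∧ ¬ U d s x)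
    then rr U w d k s else s

/-- `x` is a live candidate of the block `k` at stage `s`. -/
def LL (U : ℕ → ℕ → ℕ → Prop) (w d k s x : ℕ) : Prop :=
  x < rr U w d k s ∧ (k ≤ x ∧ U w s x ∧ ¬ U w (rr U w d k s) x ∧ ¬ U d s x)

/-- All live candidates of block `k` are in the `e`-th set. -/
def sat (U : ℕ → ℕ → ℕ → Prop) (w d e k s : ℕ) : Prop :=
  ∀ x < rr U w d k s, (LL U w d k s x → U e s x)

/-- The configuration of block `k` (used by marker `i`) changes after stage `s`. -/
def chg (U : ℕ → ℕ → ℕ → Prop) (w d i k s : ℕ) : Prop :=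
  rr U w d k s ≠ rr U w d k (s + 1) ∨
    ∃ e < i + 1, (2 * e ≤ i ∧ ¬ (sat U w d e k s ↔ sat U w d e k (s + 1)))

open Classical in
/-- The block used by marker `i` at stage `s`. -/
noncomputable def tt (U : ℕ → ℕ → ℕ → Prop) (w d : ℕ) : ℕ → ℕ → ℕ
  | 0, _ => 0
  | _ + 1, 0 => 0
  | i + 1, s + 1 =>
    if tt U w d i (s + 1) ≠ tt U w d i s ∨ chg U w d i (tt U w d i s) s then s + 1
    else tt U w d (i + 1) s

/-- `x` is passed by marker `i` at stage `s`. -/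
def pass (U : ℕ → ℕ → ℕ → Prop) (w d i s x : ℕ) : Prop :=
  LL U w d (tt U w d i s) s x ∧
    ∀ e < i + 1, 2 * e ≤ i → (∀ j < i, 2 * e ≤ j → sat U w d e (tt U w d j s) s) → U e s x

/-- `x` is dumped by marker `i`. -/
def dump (U : ℕ → ℕ → ℕ → Prop) (w d i s s' x : ℕ) : Prop :=
  LL U w d (tt U w d i s) s x ∧ s < s' ∧ tt U w d i s ≠ tt U w d i s'

section Comb

variable {U : ℕ → ℕ → ℕ → Prop} {w d : ℕ}

theorem rr_succ_cases (k s : ℕ) :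
    (rr U w d k (s + 1) = rr U w d k s ∧ ∃ x, LL U w d k s x) ∨
    (rr U w d k (s + 1) = s ∧ ¬ ∃ x, LL U w d k s x) := by
  by_cases h : ∃ x < rr U w d k s, (k ≤ x ∧ U w s x ∧ ¬ U w (rr U w d k s) x ∧ ¬ U d s x)
  · left
    exact ⟨by rw [rr, if_pos h], h⟩
  · right
    exact ⟨by rw [rr, if_neg h], h⟩

theorem rr_le (k s : ℕ) : rr U w d k s ≤ s := by
  induction s with
  | zero => simp [rr]
  | succ s ih =>
    rcases rr_succ_cases (U := U) (w := w) (d := d) k s with h | h <;> omega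

theorem rr_mono (k : ℕ) : Monotone (rr U w d k) := by
  apply monotone_nat_of_le_succ
  intro s
  have := rr_le (U := U) (w := w) (d := d) k s
  rcases rr_succ_cases (U := U) (w := w) (d := d) k s with h | h <;> omega

theorem rr_jump (k : ℕ) {s S : ℕ} (h : s ≤ S) :
    rr U w d k S = rr U w d k s ∨ s ≤ rr U w d k S := by
  induction S, h using Nat.le_induction with
  | base => left; rfl
  | succ S h ih =>
    rcases rr_succ_cases (U := U) (w := w) (d := d) k S with h | h <;> omega

theorem V_lemma (hU : ∀ e s t x, s ≤ t → U e s x → U e t x) {k x u : ℕ} (hk : k ≤ x)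
    (hx : x < rr U w d k u) (hn : ¬ U w (rr U w d k u) x) {s : ℕ} (hs : u ≤ s) :
    U w (rr U w d k s) x → U d s x := by
  induction s, hs using Nat.le_induction with
  | base => intro h; exact absurd h hn
  | succ s hs ih =>
    intro h
    rcases rr_succ_cases (U := U) (w := w) (d := d) k s with h' | h'
    · rw [h'.1] at h
      exact hU _ _ _ _ (Nat.le_succ s) (ih h)
    · rw [h'.1] at h
      apply hU _ _ _ _ (Nat.le_succ s)
      by_contra hd
      apply h'.2
      exact ⟨x, lt_of_lt_of_le hx (rr_mono k hs), hk, h, fun hh => hd (ih hh), hd⟩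

theorem mono_bdd_conv {f : ℕ → ℕ} (hf : Monotone f) (M : ℕ) (h : ∀ s, f s ≤ M) :
    ∃ R s0, ∀ s ≥ s0, f s = R := by
  induction M with
  | zero => exact ⟨0, 0, fun s _ => Nat.le_zero.1 (h s)⟩
  | succ M ih =>
    by_cases hM : ∃ s, f s = M + 1
    · obtain ⟨s0, hs0⟩ := hM
      refine ⟨M + 1, s0, fun s hs => le_antisymm (h s) ?_⟩
      rw [← hs0]; exact hf hs
    · push Not at hM
      exact ih fun s => by have := h s; have := hM s; omega

/-- finitely many eventual statements hold simultaneously -/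
theorem ev_all {P : ℕ → ℕ → Prop} (N : ℕ) (h : ∀ x < N, ∃ s0, ∀ s ≥ s0, P x s) :
    ∃ s0, ∀ s ≥ s0, ∀ x < N, P x s := by
  induction N with
  | zero => exact ⟨0, fun s _ x hx => absurd hx (Nat.not_lt_zero x)⟩
  | succ N ih =>
    obtain ⟨a, ha⟩ := ih fun x hx => h x (by omega)
    obtain ⟨b, hb⟩ := h N (by omega)
    refine ⟨max a b, fun s hs x hx => ?_⟩
    rcases Nat.lt_succ_iff_lt_or_eq.1 hx with h1 | h1
    · exact ha s (le_trans (le_max_left _ _) hs) x h1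
    · subst h1; exact hb s (le_trans (le_max_right _ _) hs)

theorem U_conv (hU : ∀ e s t x, s ≤ t → U e s x → U e t x) (e x : ℕ) :
    ∃ s0, ∀ s ≥ s0, (U e s x ↔ ∃ t, U e t x) := by
  by_cases h : ∃ t, U e t x
  · obtain ⟨t, ht⟩ := h
    exact ⟨t, fun s hs => ⟨fun h => ⟨_, h⟩, fun _ => hU _ _ _ _ hs ht⟩⟩
  · exact ⟨0, fun s _ => ⟨fun h => ⟨_, h⟩, fun h' => absurd h' h⟩⟩

/-- final live candidates -/
def Lf (U : ℕ → ℕ → ℕ → Prop) (w d k x : ℕ) : Prop := ∃ s0, ∀ s ≥ s0, LL U w d k s x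

theorem block_conv (hU : ∀ e s t x, s ≤ t → U e s x → U e t x)
    (hb : ∀ k, ∃ M, ∀ s, rr U w d k s ≤ M) (k : ℕ) :
    ∃ R s0, (∀ s ≥ s0, rr U w d k s = R) ∧ (∀ s ≥ s0, ∀ x, LL U w d k s x ↔ Lf U w d k x) ∧
      ∃ x, Lf U w d k x := by
  obtain ⟨M, hM⟩ := hb k
  obtain ⟨R, s1, hR⟩ := mono_bdd_conv (rr_mono (U := U) (w := w) (d := d) k) M hM
  obtain ⟨s2, h2⟩ := ev_all (P := fun x s => (U w s x ↔ ∃ t, U w t x)) R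
    (fun x _ => U_conv hU w x)
  obtain ⟨s3, h3⟩ := ev_all (P := fun x s => (U d s x ↔ ∃ t, U d t x)) R
    (fun x _ => U_conv hU d x)
  have key : ∀ s ≥ max s1 (max s2 s3), ∀ t ≥ max s1 (max s2 s3), ∀ x,
      LL U w d k s x → LL U w d k t x := by
    intro s hs t ht x
    simp only [ge_iff_le, max_le_iff] at hs ht
    unfold LL
    rw [hR s hs.1, hR t ht.1]
    rintro ⟨hx, hk, ha, hb, hc⟩
    refine ⟨hx, hk, ?_, hb, ?_⟩
    · exact (h2 t ht.2.1 x hx).2 ((h2 s hs.2.1 x hx).1 ha)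
    · intro h; exact hc ((h3 s hs.2.2 x hx).2 ((h3 t ht.2.2 x hx).1 h))
  have hiff : ∀ s ≥ max s1 (max s2 s3), ∀ x, LL U w d k s x ↔ Lf U w d k x := by
    intro s hs x
    constructor
    · intro h
      exact ⟨max s1 (max s2 s3), fun t ht => key s hs t ht x h⟩
    · rintro ⟨s0, h0⟩
      exact key (max s0 (max s1 (max s2 s3))) (le_max_right _ _) s hs x (h0 _ (le_max_left _ _))
  refine ⟨R, max s1 (max s2 s3), fun s hs => hR s (le_trans (le_max_left _ _) hs), hiff, ?_⟩
  set S := max s1 (max s2 s3) + R + 1 with hS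
  have hS1 : max s1 (max s2 s3) ≤ S := by omega
  rcases rr_succ_cases (U := U) (w := w) (d := d) k S with h | h
  · obtain ⟨x, hx⟩ := h.2
    exact ⟨x, (hiff S hS1 x).1 hx⟩
  · have := hR (S + 1) (by omega)
    omega

/-- final satisfaction -/
def satf (U : ℕ → ℕ → ℕ → Prop) (w d e k : ℕ) : Prop :=
  ∀ x, Lf U w d k x → ∃ t, U e t x

theorem sat_conv (hU : ∀ e s t x, s ≤ t → U e s x → U e t x)
    (hb : ∀ k, ∃ M, ∀ s, rr U w d k s ≤ M) (e k : ℕ) :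
    ∃ s0, ∀ s ≥ s0, (sat U w d e k s ↔ satf U w d e k) := by
  obtain ⟨R, s1, hR, hL, -⟩ := block_conv hU hb k
  obtain ⟨s2, h2⟩ := ev_all (P := fun x s => (U e s x ↔ ∃ t, U e t x)) R
    (fun x _ => U_conv hU e x)
  refine ⟨max s1 s2, fun s hs => ?_⟩
  simp only [ge_iff_le, max_le_iff] at hs
  constructor
  · intro h x hx
    have hx' := (hL s hs.1 x).2 hx
    exact ⟨s, h x hx'.1 hx'⟩
  · intro h x hx hx'
    rw [hR s hs.1] at hx
    exact (h2 s hs.2 x hx).2 (h x ((hL s hs.1 x).1 hx'))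

theorem chg_conv (hU : ∀ e s t x, s ≤ t → U e s x → U e t x)
    (hb : ∀ k, ∃ M, ∀ s, rr U w d k s ≤ M) (i k : ℕ) :
    ∃ s0, ∀ s ≥ s0, ¬ chg U w d i k s := by
  obtain ⟨R, s1, hR, -, -⟩ := block_conv hU hb k
  obtain ⟨s2, h2⟩ := ev_all (P := fun e s => (sat U w d e k s ↔ satf U w d e k)) (i + 1)
    (fun e _ => sat_conv hU hb e k)
  refine ⟨max s1 s2, fun s hs => ?_⟩
  simp only [ge_iff_le, max_le_iff] at hs
  rintro (h | ⟨e, he, -, h⟩)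
  · exact h (by rw [hR s hs.1, hR (s + 1) (by omega)])
  · exact h ((h2 s hs.2 e he).trans (h2 (s + 1) (by omega) e he).symm)

theorem tt_succ_cases (i s : ℕ) :
    (tt U w d (i + 1) (s + 1) = s + 1 ∧
      (tt U w d i (s + 1) ≠ tt U w d i s ∨ chg U w d i (tt U w d i s) s)) ∨
    (tt U w d (i + 1) (s + 1) = tt U w d (i + 1) s ∧ tt U w d i (s + 1) = tt U w d i s ∧
      ¬ chg U w d i (tt U w d i s) s) := by
  by_cases h : tt U w d i (s + 1) ≠ tt U w d i s ∨ chg U w d i (tt U w d i s) s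
  · left; exact ⟨by rw [tt, if_pos h], h⟩
  · right
    refine ⟨by rw [tt, if_neg h], ?_⟩
    push Not at h
    exact h

theorem tt_zero (i : ℕ) : tt U w d i 0 = 0 := by cases i <;> simp [tt]

theorem tt_step (i s : ℕ) :
    tt U w d i (s + 1) = s + 1 ∨ tt U w d i (s + 1) = tt U w d i s := by
  cases i with
  | zero => right; simp [tt]
  | succ i =>
    rcases tt_succ_cases (U := U) (w := w) (d := d) i s with h | h
    · left; exact h.1
    · right; exact h.1

theorem tt_le (i s : ℕ) : tt U w d i s ≤ s := by
  induction s with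
  | zero => simp [tt_zero]
  | succ s ih => rcases tt_step (U := U) (w := w) (d := d) i s with h | h <;> omega

theorem tt_mono (i : ℕ) : Monotone (tt U w d i) := by
  apply monotone_nat_of_le_succ
  intro s
  have := tt_le (U := U) (w := w) (d := d) i s
  rcases tt_step (U := U) (w := w) (d := d) i s with h | h <;> omega

theorem tt_tt (i s : ℕ) : tt U w d i (tt U w d i s) = tt U w d i s := by
  induction s with
  | zero => simp [tt_zero]
  | succ s ih =>
    rcases tt_step (U := U) (w := w) (d := d) i s with h | h
    · rw [h, h]
    · rw [h, ih]

theorem tt_le_succ (i s : ℕ) : tt U w d i s ≤ tt U w d (i + 1) s := by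
  induction s with
  | zero => simp [tt_zero]
  | succ s ih =>
    have := tt_le (U := U) (w := w) (d := d) i (s + 1)
    rcases tt_succ_cases (U := U) (w := w) (d := d) i s with h | h <;> omega

theorem tt_le_of_le {i j : ℕ} (h : i ≤ j) (s : ℕ) : tt U w d i s ≤ tt U w d j s := by
  induction j, h using Nat.le_induction with
  | base => rfl
  | succ j h ih => exact ih.trans (tt_le_succ j s)

theorem stab (i u s : ℕ) (hus : u ≤ s) (hu : tt U w d (i + 1) s ≤ u) :
    tt U w d i u = tt U w d i s ∧
    rr U w d (tt U w d i u) u = rr U w d (tt U w d i s) s ∧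
    ∀ e, 2 * e ≤ i → (sat U w d e (tt U w d i u) u ↔ sat U w d e (tt U w d i s) s) := by
  induction s, hus using Nat.le_induction with
  | base => exact ⟨rfl, rfl, fun _ _ => Iff.rfl⟩
  | succ s hus ih =>
    rcases tt_succ_cases (U := U) (w := w) (d := d) i s with h | h
    · omega
    · obtain ⟨a, b, c⟩ := ih (by omega)
      have h2 := h.2.2
      unfold chg at h2
      push Not at h2
      refine ⟨by rw [h.2.1, a], by rw [h.2.1, b, h2.1], fun e he => ?_⟩
      rw [h.2.1]
      refine (c e he).trans ?_
      by_contra hcon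
      have := h2.2 e (by omega) he
      tauto

theorem rr_le_tt {i i' : ℕ} (h : i < i') (s : ℕ) :
    rr U w d (tt U w d i s) s ≤ tt U w d i' s := by
  have h1 := stab (U := U) (w := w) (d := d) i (tt U w d (i + 1) s) s (tt_le _ _) le_rfl
  rw [← h1.2.1]
  exact (rr_le _ _).trans (tt_le_of_le h s)

theorem tt_conv (hU : ∀ e s t x, s ≤ t → U e s x → U e t x)
    (hb : ∀ k, ∃ M, ∀ s, rr U w d k s ≤ M) (i : ℕ) :
    ∃ k s0, ∀ s ≥ s0, tt U w d i s = k := by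
  induction i with
  | zero => exact ⟨0, 0, fun s _ => by simp [tt]⟩
  | succ i ih =>
    obtain ⟨k, s0, h0⟩ := ih
    obtain ⟨s1, h1⟩ := chg_conv hU hb i k
    refine ⟨tt U w d (i + 1) (max s0 s1), max s0 s1, fun s hs => ?_⟩
    induction s, hs using Nat.le_induction with
    | base => rfl
    | succ s hs ih =>
      have hs' := hs
      simp only [max_le_iff] at hs'
      rcases tt_succ_cases (U := U) (w := w) (d := d) i s with h | h
      · rcases h.2 with h' | h'
        · exact absurd (by rw [h0 s hs'.1, h0 (s + 1) (by omega)]) h'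
        · rw [h0 s hs'.1] at h'
          exact absurd h' (h1 s hs'.2)
      · rw [h.1, ih]

theorem tt_final (hU : ∀ e s t x, s ≤ t → U e s x → U e t x)
    (hb : ∀ k, ∃ M, ∀ s, rr U w d k s ≤ M) :
    ∃ T : ℕ → ℕ, ∀ i, ∀ s ≥ T i, tt U w d i s = T i := by
  choose T S hT using tt_conv hU hb
  refine ⟨T, fun i s hs => ?_⟩
  have h1 := tt_tt (U := U) (w := w) (d := d) i (S i)
  rw [hT i _ le_rfl] at h1
  apply le_antisymm
  · rw [← hT i (max s (S i)) (le_max_right _ _)]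
    exact tt_mono i (le_max_left _ _)
  · have h2 := tt_mono (U := U) (w := w) (d := d) i hs
    rw [h1] at h2
    exact h2

theorem LL_W {k s x : ℕ} (h : LL U w d k s x) : U w s x := h.2.2.1

/-- a candidate of a final block can only be a candidate of that very marker -/
theorem disj (hU : ∀ e s t x, s ≤ t → U e s x → U e t x) {T : ℕ → ℕ}
    (hT : ∀ i, ∀ s ≥ T i, tt U w d i s = T i) {i i' S s x : ℕ}
    (h1 : LL U w d (T i) S x) (h2 : LL U w d (tt U w d i' s) s x) :
    i' = i ∧ T i ≤ s := by
  obtain ⟨a1, a2, a3, a4, a5⟩ := h1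
  obtain ⟨b1, b2, b3, b4, b5⟩ := h2
  have hs : T i ≤ s := by
    by_contra hs
    exact a4 (hU _ _ _ _ (by omega) b3)
  refine ⟨?_, hs⟩
  have hti := hT i s hs
  rcases lt_trichotomy i' i with h | h | h
  · have := rr_le_tt (U := U) (w := w) (d := d) h s
    omega
  · exact h
  · exfalso
    have h3 := rr_le_tt (U := U) (w := w) (d := d) h s
    rw [hti] at h3
    have hSs : s ≤ S := by
      by_contra hc
      have := rr_mono (U := U) (w := w) (d := d) (T i) (show S ≤ s by omega)
      omega
    rcases rr_jump (U := U) (w := w) (d := d) (T i) hSs with h4 | h4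
    · omega
    · exact a4 (hU _ _ _ _ h4 b3)

theorem sat_final (hU : ∀ e s t x, s ≤ t → U e s x → U e t x)
    (hb : ∀ k, ∃ M, ∀ s, rr U w d k s ≤ M) {T : ℕ → ℕ}
    (hT : ∀ i, ∀ s ≥ T i, tt U w d i s = T i) {i j e s : ℕ} (hj : j < i) (he : 2 * e ≤ j)
    (hs : T i ≤ s) : sat U w d e (tt U w d j s) s ↔ satf U w d e (T j) := by
  obtain ⟨S, hS⟩ := sat_conv hU hb e (T j)
  set S' := max s (max S (T j)) with hS'
  have e1 : s ≤ S' := le_max_left _ _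
  have e2 : S ≤ S' := le_trans (le_max_left _ _) (le_max_right _ _)
  have e3 : T j ≤ S' := le_trans (le_max_right _ _) (le_max_right _ _)
  have h1 : tt U w d (j + 1) S' ≤ s := by
    have := tt_le_of_le (U := U) (w := w) (d := d) (show j + 1 ≤ i from hj) S'
    rw [hT i S' (by omega)] at this
    omega
  rw [(stab j s S' e1 h1).2.2 e he, hT j S' e3]
  exact hS S' e2

theorem not_dump (hU : ∀ e s t x, s ≤ t → U e s x → U e t x) {T : ℕ → ℕ}
    (hT : ∀ i, ∀ s ≥ T i, tt U w d i s = T i) {i x : ℕ}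
    (h1 : Lf U w d (T i) x) (i' s s' : ℕ) : ¬ dump U w d i' s s' x := by
  rintro ⟨h2, hss, hne⟩
  obtain ⟨s0, h0⟩ := h1
  obtain ⟨rfl, hs⟩ := disj hU hT (h0 s0 le_rfl) h2
  exact hne (by rw [hT _ _ hs, hT _ _ (by omega)])

theorem Lf_not_d (hU : ∀ e s t x, s ≤ t → U e s x → U e t x) {k x : ℕ}
    (h1 : Lf U w d k x) : ¬ ∃ t, U d t x := by
  rintro ⟨t, ht⟩
  obtain ⟨s0, h0⟩ := h1
  exact (h0 (max s0 t) (le_max_left _ _)).2.2.2.2 (hU _ _ _ _ (le_max_right _ _) ht)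

theorem comb_main (hU : ∀ e s t x, s ≤ t → U e s x → U e t x)
    (hb : ∀ k, ∃ M, ∀ s, rr U w d k s ≤ M)
    (Dt At : Set ℕ)
    (hDt : ∀ x, x ∈ Dt ↔ (∃ t, U d t x) ∨ ∃ i s s', dump U w d i s s' x)
    (hAt : ∀ x, x ∈ At ↔ x ∈ Dt ∨ ∃ i s, pass U w d i s x) :
    (At \ Dt).Infinite ∧ ∀ e, (∀ x, x ∈ At ∨ ∃ t, U e t x) →
      {x | x ∉ Dt ∧ ¬ ∃ t, U e t x}.Finite := by
  obtain ⟨T, hT⟩ := tt_final hU hb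
  have hnD : ∀ i x, Lf U w d (T i) x → x ∉ Dt := by
    intro i x hx h
    rcases (hDt x).1 h with h | ⟨i', s, s', h⟩
    · exact Lf_not_d hU hx h
    · exact not_dump hU hT hx i' s s' h
  have hTT : ∀ i, T i < T (i + 1) := by
    intro i
    obtain ⟨R, s0, hR, hL, x, hx⟩ := block_conv hU hb (T i)
    set S := max s0 (max (T i) (T (i + 1))) with hS
    have e1 : s0 ≤ S := le_max_left _ _
    have e2 : T i ≤ S := le_trans (le_max_left _ _) (le_max_right _ _)
    have e3 : T (i + 1) ≤ S := le_trans (le_max_right _ _) (le_max_right _ _)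
    have h1 := (hL S e1 x).2 hx
    have h2 := rr_le_tt (U := U) (w := w) (d := d) (Nat.lt_succ_self i) S
    rw [hT i S e2, hT _ S e3] at h2
    have h3 := h1.1
    have h4 := h1.2.1
    omega
  have hTi : ∀ i, i ≤ T i := by
    intro i
    induction i with
    | zero => omega
    | succ i ih => have := hTT i; omega
  constructor
  · -- infinitude
    rw [Set.infinite_iff_exists_gt]
    intro N
    -- good markers
    have hgood : ∃ i ≥ N + 1, ∀ e, 2 * e ≤ i → (∀ j < i, 2 * e ≤ j → satf U w d e (T j)) →
        satf U w d e (T i) := by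
      by_contra hcon
      push Not at hcon
      choose! g hg1 hg2 hg3 using hcon
      have hmaps : ∀ i ∈ Finset.Ico (N + 1) (2 * (N + 1) + 2), g i ∈ Finset.range (N + 2) := by
        intro i hi
        rw [Finset.mem_Ico] at hi
        rw [Finset.mem_range]
        have := hg1 i hi.1
        omega
      obtain ⟨a, ha, b, hb', hab, hgab⟩ :=
        Finset.exists_ne_map_eq_of_card_lt_of_maps_to
          (by rw [Nat.card_Ico, Finset.card_range]; omega) hmaps
      rw [Finset.mem_Ico] at ha hb'
      rcases lt_or_gt_of_ne hab with h | h
      · apply hg3 a ha.1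
        rw [hgab]
        exact hg2 b hb'.1 a h (by rw [← hgab]; exact hg1 a ha.1)
      · apply hg3 b hb'.1
        rw [← hgab]
        exact hg2 a ha.1 b h (by rw [hgab]; exact hg1 b hb'.1)
    obtain ⟨i, hi, hgd⟩ := hgood
    obtain ⟨R, s0, hR, hL, x, hx⟩ := block_conv hU hb (T i)
    have hxk : T i ≤ x := ((hL s0 le_rfl x).2 hx).2.1
    refine ⟨x, ⟨?_, hnD i x hx⟩, by have := hTi i; omega⟩
    obtain ⟨s1, h1⟩ := ev_all (P := fun e s => (U e s x ↔ ∃ t, U e t x)) (i + 1)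
      (fun e _ => U_conv hU e x)
    set S := max s0 (max s1 (T i)) with hS
    have e1 : s0 ≤ S := le_max_left _ _
    have e2 : s1 ≤ S := le_trans (le_max_left _ _) (le_max_right _ _)
    have e3 : T i ≤ S := le_trans (le_max_right _ _) (le_max_right _ _)
    refine (hAt x).2 (Or.inr ⟨i, S, ?_, ?_⟩)
    · rw [hT i S e3]; exact (hL S e1 x).2 hx
    · intro e he h2e hbel
      refine (h1 S e2 e he).2 (hgd e h2e (fun j hj hej => ?_) x hx)
      exact (sat_final hU hb hT hj hej e3).1 (hbel j hj hej)
  · intro e hcov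
    have claim : ∀ i, 2 * e ≤ i → satf U w d e (T i) := by
      intro i
      induction i using Nat.strong_induction_on with
      | _ i ih =>
        intro hei x hx
        rcases hcov x with h | h
        · rcases (hAt x).1 h with h | ⟨i', s, hp⟩
          · exact absurd h (hnD i x hx)
          · obtain ⟨s0, h0⟩ := hx
            obtain ⟨rfl, hs⟩ := disj hU hT (h0 s0 le_rfl) hp.1
            exact ⟨s, hp.2 e (by omega) hei fun j hj hej =>
              (sat_final hU hb hT hj hej hs).2 (ih j hj hej)⟩
        · exact h
    choose M hM using hb
    obtain ⟨B, hB⟩ : ∃ B, ∀ i < 2 * e, M (T i) ≤ B := by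
      refine ⟨∑ i ∈ Finset.range (2 * e), M (T i), fun i hi => ?_⟩
      exact Finset.single_le_sum (f := fun i => M (T i)) (fun _ _ => Nat.zero_le _)
        (Finset.mem_range.2 hi)
    apply (Set.finite_lt_nat B).subset
    rintro x ⟨hxD, hxe⟩
    rcases hcov x with h | h
    · rcases (hAt x).1 h with h | ⟨i, s, hp⟩
      · exact absurd h hxD
      · have hfin : ∀ s' > s, tt U w d i s = tt U w d i s' := by
          intro s' hs'
          by_contra hne
          exact hxD ((hDt x).2 (Or.inr ⟨i, s, s', hp.1, hs', hne⟩))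
        have hti : tt U w d i s = T i := by
          rw [hfin (max (s + 1) (T i)) (lt_of_lt_of_le (Nat.lt_succ_self s) (le_max_left _ _))]
          exact hT i _ (le_max_right _ _)
        by_cases hi : i < 2 * e
        · have h1 := hp.1.1
          rw [hti] at h1
          have h2 := hM (T i) s
          have h3 := hB i hi
          show x < B
          omega
        · exfalso
          apply hxe
          have hs : T i ≤ s := by rw [← hti]; exact tt_le _ _
          exact ⟨s, hp.2 e (by omega) (by omega) fun j hj hej =>
            (sat_final hU (fun k => ⟨M k, hM k⟩) hT hj hej hs).2 (claim j hej)⟩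
    · exact absurd h hxe

end Comb

section Computability

open Nat.Partrec (Code)
open Nat.Partrec.Code

/-- Stage `s` of the `e`-th c.e. set. -/
def UU (e s x : ℕ) : Prop := (evaln s (Denumerable.ofNat Code e) x).isSome = true

theorem UU_mono (e s t x : ℕ) (h : s ≤ t) (hx : UU e s x) : UU e t x := by
  unfold UU at *
  rw [Option.isSome_iff_exists] at *
  obtain ⟨a, ha⟩ := hx
  exact ⟨a, evaln_mono h ha⟩

theorem ce_index {A : Set ℕ} (h : CE A) : ∃ e, ∀ x, x ∈ A ↔ ∃ s, UU e s x := by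
  obtain ⟨f, hf, rfl⟩ := h
  obtain ⟨c, hc⟩ := exists_code.1 (Partrec.nat_iff.1 hf)
  refine ⟨Encodable.encode c, fun x => ?_⟩
  unfold UU
  rw [Denumerable.ofNat_encode, ← hc]
  rw [PFun.mem_dom]
  simp only [evaln_complete, Option.isSome_iff_exists, Option.mem_def]
  exact exists_comm

theorem ce_of_primrec {γ : Type} [Primcodable γ] [Inhabited γ]
    {p : ℕ → γ → Prop} (hp : PrimrecPred fun q : ℕ × γ => p q.1 q.2) :
    CE {x | ∃ n, p x n} := by
  classical
  have h1 : PrimrecPred fun q : ℕ × ℕ =>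
      p q.1 ((Encodable.decode (α := γ) q.2).getD default) :=
    hp.comp (Primrec.fst.pair
      (Primrec.option_getD.comp (Primrec.decode.comp Primrec.snd) (Primrec.const default)))
  have h2 : Partrec₂ fun (x n : ℕ) =>
      (Part.some (decide (p x ((Encodable.decode (α := γ) n).getD default))) : Part Bool) :=
    h1.decide.to_comp
  refine ⟨_, Partrec.rfind h2, ?_⟩
  ext x
  change (∃ n, p x n) ↔ (Nat.rfind _).Dom
  refine Iff.trans ?_ Nat.rfind_dom.symm
  constructor
  · rintro ⟨n, hn⟩
    exact ⟨Encodable.encode n, by simpa using hn, fun _ => trivial⟩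
  · rintro ⟨n, hn, -⟩
    exact ⟨_, by simpa using hn⟩

variable {α : Type} [Primcodable α]

theorem bex {p : α → ℕ → Prop} {b : α → ℕ} (hb : Primrec b)
    (hp : PrimrecPred fun q : α × ℕ => p q.1 q.2) :
    PrimrecPred fun a => ∃ x < b a, p a x := by
  have h : PrimrecRel fun (x : ℕ) (a : α) => p a x :=
    hp.comp (Primrec.snd.pair Primrec.fst)
  exact (h.exists_mem_list.comp (Primrec.list_range.comp hb) Primrec.id).of_eq fun a => by simp

theorem ball {p : α → ℕ → Prop} {b : α → ℕ} (hb : Primrec b)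
    (hp : PrimrecPred fun q : α × ℕ => p q.1 q.2) :
    PrimrecPred fun a => ∀ x < b a, p a x := by
  have h : PrimrecRel fun (x : ℕ) (a : α) => p a x :=
    hp.comp (Primrec.snd.pair Primrec.fst)
  exact (h.forall_mem_list.comp (Primrec.list_range.comp hb) Primrec.id).of_eq fun a => by simp

theorem pimp {p q : α → Prop} (hp : PrimrecPred p) (hq : PrimrecPred q) :
    PrimrecPred fun a => p a → q a :=
  (hp.not.or hq).of_eq fun a => by tauto

theorem piff {p q : α → Prop} (hp : PrimrecPred p) (hq : PrimrecPred q) :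
    PrimrecPred fun a => (p a ↔ q a) :=
  ((pimp hp hq).and (pimp hq hp)).of_eq fun a => by tauto

theorem pr_UU {e s x : α → ℕ} (he : Primrec e) (hs : Primrec s) (hx : Primrec x) :
    PrimrecPred fun a => UU (e a) (s a) (x a) := by
  have h : Primrec fun a => (evaln (s a) (Denumerable.ofNat Code (e a)) (x a)).isSome :=
    Primrec.option_isSome.comp
      (primrec_evaln.comp ((hs.pair ((Primrec.ofNat Code).comp he)).pair hx))
  exact Primrec.eq.comp h (Primrec.const true)

theorem pr_rr₂ (w d : ℕ) : Primrec₂ (rr UU w d) := by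
  classical
  have := Primrec.nat_rec (α := ℕ) (β := ℕ) (f := fun _ => 0)
    (g := fun k p => if ∃ x < p.2, (k ≤ x ∧ UU w p.1 x ∧ ¬ UU w p.2 x ∧ ¬ UU d p.1 x)
      then p.2 else p.1) (Primrec.const 0) (by
      refine Primrec.ite ?_ (Primrec.snd.comp Primrec.snd) (Primrec.fst.comp Primrec.snd)
      refine bex (Primrec.snd.comp Primrec.snd) ?_
      have hx : Primrec fun q : (ℕ × ℕ × ℕ) × ℕ => q.2 := Primrec.snd
      have hk : Primrec fun q : (ℕ × ℕ × ℕ) × ℕ => q.1.1 := Primrec.fst.comp Primrec.fst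
      have hs : Primrec fun q : (ℕ × ℕ × ℕ) × ℕ => q.1.2.1 :=
        Primrec.fst.comp (Primrec.snd.comp Primrec.fst)
      have hr : Primrec fun q : (ℕ × ℕ × ℕ) × ℕ => q.1.2.2 :=
        Primrec.snd.comp (Primrec.snd.comp Primrec.fst)
      exact (Primrec.nat_le.comp hk hx).and ((pr_UU (Primrec.const w) hs hx).and
        ((pr_UU (Primrec.const w) hr hx).not.and (pr_UU (Primrec.const d) hs hx).not)))
  refine this.of_eq fun k s => ?_
  induction s with
  | zero => rfl
  | succ s ih =>
    rw [rr]
    simp only at ih ⊢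
    rw [ih]

theorem pr_rr (w d : ℕ) {k s : α → ℕ} (hk : Primrec k) (hs : Primrec s) :
    Primrec fun a => rr UU w d (k a) (s a) := (pr_rr₂ w d).comp hk hs

theorem pr_LL (w d : ℕ) {k s x : α → ℕ} (hk : Primrec k) (hs : Primrec s) (hx : Primrec x) :
    PrimrecPred fun a => LL UU w d (k a) (s a) (x a) :=
  (Primrec.nat_lt.comp hx (pr_rr w d hk hs)).and
    ((Primrec.nat_le.comp hk hx).and ((pr_UU (Primrec.const w) hs hx).and
      ((pr_UU (Primrec.const w) (pr_rr w d hk hs) hx).not.and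
        (pr_UU (Primrec.const d) hs hx).not)))

theorem pr_sat (w d : ℕ) {e k s : α → ℕ} (he : Primrec e) (hk : Primrec k) (hs : Primrec s) :
    PrimrecPred fun a => sat UU w d (e a) (k a) (s a) :=
  ball (pr_rr w d hk hs)
    (pimp (pr_LL w d (hk.comp Primrec.fst) (hs.comp Primrec.fst) Primrec.snd)
      (pr_UU (he.comp Primrec.fst) (hs.comp Primrec.fst) Primrec.snd))

theorem pr_two_mul {e : α → ℕ} (he : Primrec e) : Primrec fun a => 2 * e a :=
  Primrec.nat_mul.comp (Primrec.const 2) he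

theorem pr_chg (w d : ℕ) {i k s : α → ℕ} (hi : Primrec i) (hk : Primrec k) (hs : Primrec s) :
    PrimrecPred fun a => chg UU w d (i a) (k a) (s a) := by
  have hs' : Primrec fun a => s a + 1 := Primrec.succ.comp hs
  refine (Primrec.eq.comp (pr_rr w d hk hs) (pr_rr w d hk hs')).not.or
    (bex (Primrec.succ.comp hi) ?_)
  exact (Primrec.nat_le.comp (pr_two_mul Primrec.snd) (hi.comp Primrec.fst)).and
    (piff (pr_sat w d Primrec.snd (hk.comp Primrec.fst) (hs.comp Primrec.fst))
      (pr_sat w d Primrec.snd (hk.comp Primrec.fst) (hs'.comp Primrec.fst))).not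

open Classical in
/-- one step of the recursion for `tt`, reading previous values from a list -/
noncomputable def ttCore (w d : ℕ) (l : List ℕ) (i s : ℕ) : ℕ :=
  if i = 0 then 0
  else if s = 0 then 0
  else
    if l.getD (Nat.pair i.pred s) 0 ≠ l.getD (Nat.pair i.pred s.pred) 0 ∨
      chg UU w d i.pred (l.getD (Nat.pair i.pred s.pred) 0) s.pred
    then s
    else l.getD (Nat.pair i s.pred) 0

/-- one step of the recursion for `tt` -/
noncomputable def ttStep (w d : ℕ) (l : List ℕ) : ℕ :=
  ttCore w d l l.length.unpair.1 l.length.unpair.2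

theorem pr_ttStep (w d : ℕ) : Primrec (ttStep w d) := by
  classical
  have hl : Primrec fun l : List ℕ => l.length.unpair := Primrec.unpair.comp Primrec.list_length
  have h1 : Primrec fun l : List ℕ => l.length.unpair.1 := Primrec.fst.comp hl
  have h2 : Primrec fun l : List ℕ => l.length.unpair.2 := Primrec.snd.comp hl
  have h1' : Primrec fun l : List ℕ => l.length.unpair.1.pred := Primrec.pred.comp h1
  have h2' : Primrec fun l : List ℕ => l.length.unpair.2.pred := Primrec.pred.comp h2
  have hg : ∀ {a b : List ℕ → ℕ}, Primrec a → Primrec b →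
      Primrec fun l : List ℕ => l.getD (Nat.pair (a l) (b l)) 0 := fun ha hb =>
    (Primrec.list_getD 0).comp Primrec.id (Primrec₂.natPair.comp ha hb)
  unfold ttStep ttCore
  refine Primrec.ite (Primrec.eq.comp h1 (Primrec.const 0)) (Primrec.const 0) ?_
  refine Primrec.ite (Primrec.eq.comp h2 (Primrec.const 0)) (Primrec.const 0) ?_
  refine Primrec.ite ?_ h2 (hg h1 h2')
  exact (Primrec.eq.comp (hg h1' h2) (hg h1' h2')).not.or (pr_chg w d h1' (hg h1' h2') h2')

theorem pr_tt₂ (w d : ℕ) : Primrec₂ (tt UU w d) := by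
  have h : Primrec₂ fun (_ : Unit) (n : ℕ) => tt UU w d n.unpair.1 n.unpair.2 := by
    refine Primrec.nat_strong_rec _ (g := fun _ l => some (ttStep w d l))
      (Primrec.option_some.comp ((pr_ttStep w d).comp Primrec.snd)) ?_
    intro _ n
    congr 1
    have hget : ∀ i s, Nat.pair i s < n →
        ((List.range n).map fun m => tt UU w d m.unpair.1 m.unpair.2).getD (Nat.pair i s) 0 =
          tt UU w d i s := by
      intro i s h
      rw [List.getD_eq_getElem _ _ (by simpa using h)]
      simp
    obtain ⟨i, s, rfl⟩ : ∃ i s, n = Nat.pair i s := ⟨n.unpair.1, n.unpair.2, by simp⟩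
    unfold ttStep
    rw [List.length_map, List.length_range, Nat.unpair_pair]
    unfold ttCore
    rcases i with _ | i
    · simp [tt]
    rcases s with _ | s
    · simp [tt]
    have l1 : Nat.pair i (s + 1) < Nat.pair (i + 1) (s + 1) := Nat.pair_lt_pair_left _ (by omega)
    have l2 : Nat.pair (i + 1) s < Nat.pair (i + 1) (s + 1) := Nat.pair_lt_pair_right _ (by omega)
    have l3 : Nat.pair i s < Nat.pair (i + 1) (s + 1) :=
      (Nat.pair_lt_pair_right _ (by omega)).trans l1
    rw [if_neg (Nat.succ_ne_zero i), if_neg (Nat.succ_ne_zero s)]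
    simp only [Nat.pred_succ, hget _ _ l1, hget _ _ l2, hget _ _ l3]
    rw [tt]
    congr
    · exact hget _ _ l1
    · exact hget _ _ l3
    · exact hget _ _ l3
  refine (h.comp (Primrec.const ()) (Primrec₂.natPair)).of_eq ?_
  rintro ⟨i, s⟩
  simp

theorem pr_tt (w d : ℕ) {i s : α → ℕ} (hi : Primrec i) (hs : Primrec s) :
    Primrec fun a => tt UU w d (i a) (s a) := (pr_tt₂ w d).comp hi hs

theorem pr_pass (w d : ℕ) {i s x : α → ℕ} (hi : Primrec i) (hs : Primrec s) (hx : Primrec x) :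
    PrimrecPred fun a => pass UU w d (i a) (s a) (x a) := by
  refine (pr_LL w d (pr_tt w d hi hs) hs hx).and (ball (Primrec.succ.comp hi) ?_)
  refine pimp (Primrec.nat_le.comp (pr_two_mul Primrec.snd) (hi.comp Primrec.fst)) ?_
  refine pimp ?_ (pr_UU Primrec.snd (hs.comp Primrec.fst) (hx.comp Primrec.fst))
  refine ball (hi.comp Primrec.fst) ?_
  refine pimp (Primrec.nat_le.comp (pr_two_mul (Primrec.snd.comp Primrec.fst)) Primrec.snd) ?_
  have hs' : Primrec fun q : (α × ℕ) × ℕ => s q.1.1 := hs.comp (Primrec.fst.comp Primrec.fst)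
  exact pr_sat w d (Primrec.snd.comp Primrec.fst) (pr_tt w d Primrec.snd hs') hs'

theorem pr_dump (w d : ℕ) {i s s' x : α → ℕ} (hi : Primrec i) (hs : Primrec s)
    (hs' : Primrec s') (hx : Primrec x) :
    PrimrecPred fun a => dump UU w d (i a) (s a) (s' a) (x a) :=
  (pr_LL w d (pr_tt w d hi hs) hs hx).and ((Primrec.nat_lt.comp hs hs').and
    (Primrec.eq.comp (pr_tt w d hi hs) (pr_tt w d hi hs')).not)

theorem ce_Dt (w d : ℕ) :
    CE {x | (∃ t, UU d t x) ∨ ∃ i s s', dump UU w d i s s' x} := by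
  have h1 : Primrec fun q : ℕ × ℕ × ℕ × ℕ => q.2.1 := Primrec.fst.comp Primrec.snd
  have h2 : Primrec fun q : ℕ × ℕ × ℕ × ℕ => q.2.2.1 :=
    Primrec.fst.comp (Primrec.snd.comp Primrec.snd)
  have h3 : Primrec fun q : ℕ × ℕ × ℕ × ℕ => q.2.2.2 :=
    Primrec.snd.comp (Primrec.snd.comp Primrec.snd)
  have := ce_of_primrec (γ := ℕ × ℕ × ℕ)
    (p := fun x n => UU d n.1 x ∨ dump UU w d n.1 n.2.1 n.2.2 x)
    ((pr_UU (Primrec.const d) h1 Primrec.fst).or (pr_dump w d h1 h2 h3 Primrec.fst))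
  convert this using 2
  ext x
  simp [exists_or]

theorem ce_At (w d : ℕ) :
    CE {x | ((∃ t, UU d t x) ∨ ∃ i s s', dump UU w d i s s' x) ∨ ∃ i s, pass UU w d i s x} := by
  have h1 : Primrec fun q : ℕ × ℕ × ℕ × ℕ => q.2.1 := Primrec.fst.comp Primrec.snd
  have h2 : Primrec fun q : ℕ × ℕ × ℕ × ℕ => q.2.2.1 :=
    Primrec.fst.comp (Primrec.snd.comp Primrec.snd)
  have h3 : Primrec fun q : ℕ × ℕ × ℕ × ℕ => q.2.2.2 :=
    Primrec.snd.comp (Primrec.snd.comp Primrec.snd)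
  have := ce_of_primrec (γ := ℕ × ℕ × ℕ)
    (p := fun x n => (UU d n.1 x ∨ dump UU w d n.1 n.2.1 n.2.2 x) ∨ pass UU w d n.1 n.2.1 x)
    (((pr_UU (Primrec.const d) h1 Primrec.fst).or (pr_dump w d h1 h2 h3 Primrec.fst)).or
      (pr_pass w d h1 h2 Primrec.fst))
  convert this using 2
  ext x
  simp [exists_or]

/-- If some block never settles, then `(ℕ ∖ W) ∪ D` is c.e. -/
theorem ce_of_unbounded (w d k : ℕ) (hk : ∀ M, ∃ s, M < rr UU w d k s) :
    CE {x | (¬ ∃ t, UU w t x) ∨ ∃ t, UU d t x} := by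
  classical
  set l : List ℕ := (List.range k).filter fun x => ¬ ∃ t, UU w t x with hl
  have hpr : PrimrecPred fun q : ℕ × ℕ => ((k ≤ q.1 ∧ q.1 < rr UU w d k q.2 ∧
      ¬ UU w (rr UU w d k q.2) q.1) ∨ UU d q.2 q.1) ∨ ∃ a ∈ l, a = q.1 := by
    have hr := pr_rr w d (Primrec.const k) (Primrec.snd (α := ℕ) (β := ℕ))
    refine (((Primrec.nat_le.comp (Primrec.const k) Primrec.fst).and
      ((Primrec.nat_lt.comp Primrec.fst hr).and
        (pr_UU (Primrec.const w) hr Primrec.fst).not)).or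
      (pr_UU (Primrec.const d) Primrec.snd Primrec.fst)).or ?_
    exact (PrimrecRel.exists_mem_list (Primrec.eq (α := ℕ))).comp (Primrec.const l) Primrec.fst
  have := ce_of_primrec (γ := ℕ) (p := fun x s => ((k ≤ x ∧ x < rr UU w d k s ∧
      ¬ UU w (rr UU w d k s) x) ∨ UU d s x) ∨ ∃ a ∈ l, a = x) hpr
  convert this using 2
  ext x
  constructor
  · rintro (h | ⟨t, ht⟩)
    · rcases lt_or_ge x k with hx | hx
      · exact ⟨0, Or.inr ⟨x, by simp only [hl, List.mem_filter, List.mem_range]; simpa [hx] using h,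
          rfl⟩⟩
      · obtain ⟨s, hs⟩ := hk x
        exact ⟨s, Or.inl (Or.inl ⟨hx, hs, fun hh => h ⟨_, hh⟩⟩)⟩
    · exact ⟨t, Or.inl (Or.inr ht)⟩
  · rintro ⟨s, (⟨hx, hs, hn⟩ | h) | ⟨a, ha, rfl⟩⟩
    · by_contra hcon
      push Not at hcon
      obtain ⟨⟨t, ht⟩, hd⟩ := hcon
      obtain ⟨u, hu⟩ := hk (max t (rr UU w d k s))
      have hsu : s ≤ u := by
        by_contra hc
        have := rr_mono (U := UU) (w := w) (d := d) k (show u ≤ s by omega)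
        have := le_max_right t (rr UU w d k s)
        omega
      have := le_max_left t (rr UU w d k s)
      exact hd u (V_lemma UU_mono hx hs hn hsu (UU_mono _ _ _ _ (by omega) ht))
    · exact Or.inr ⟨s, h⟩
    · left
      simp only [hl, List.mem_filter] at ha
      simpa using ha.2

end Computability

end MajorAux

/-- If `D` is c.e. and there is a c.e. set `W ⊇ D` such that
`(ℕ ∖ W) ∪ D` is not c.e. (i.e. the lattice of c.e. supersets of `D` is not a
boolean algebra), then there are c.e. sets `D̃`, `Ã` with `D ⊆ D̃ ⊆ Ã` and
`D̃ ⊂ₘ Ã`. -/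
theorem stmt15 (D : Set ℕ) (hD : CE D)
    (hnotBA : ∃ W : Set ℕ, CE W ∧ D ⊆ W ∧ ¬ CE ((Set.univ \ W) ∪ D)) :
    ∃ Dt At : Set ℕ, CE Dt ∧ CE At ∧ D ⊆ Dt ∧ Dt ⊆ At ∧ MajorSubset Dt At := by
  obtain ⟨W, hW, -, hn⟩ := hnotBA
  obtain ⟨d, hd⟩ := MajorAux.ce_index hD
  obtain ⟨w, hw⟩ := MajorAux.ce_index hW
  have hb : ∀ k, ∃ M, ∀ s, MajorAux.rr MajorAux.UU w d k s ≤ M := by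
    by_contra hcon
    push Not at hcon
    obtain ⟨k, hk⟩ := hcon
    apply hn
    convert MajorAux.ce_of_unbounded w d k hk using 1
    ext x
    simp only [Set.mem_union, Set.mem_sdiff, Set.mem_univ, true_and, Set.mem_ofPred_eq, hd, hw]
  refine ⟨_, _, MajorAux.ce_Dt w d, MajorAux.ce_At w d, ?_, ?_, ?_, ?_⟩
  · intro x hx
    exact Or.inl ((hd x).1 hx)
  · intro x hx
    exact Or.inl hx
  · intro x hx
    exact Or.inl hx
  · obtain ⟨h1, h2⟩ := MajorAux.comb_main MajorAux.UU_mono hb _ _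
      (fun x => Iff.rfl) (fun x => Iff.rfl)
    refine ⟨h1, fun V hV hcov => ?_⟩
    obtain ⟨e, he⟩ := MajorAux.ce_index hV
    refine (h2 e fun x => ?_).subset ?_
    · have : x ∈ _ ∪ V := hcov.symm ▸ Set.mem_univ x
      rcases this with h | h
      · exact Or.inl h
      · exact Or.inr ((he x).1 h)
    · rintro x ⟨-, hx⟩
      exact ⟨fun h => hx (Or.inl h), fun h => hx (Or.inr ((he x).2 h))⟩
end

section
/- It is not possible to code an infinite linear ordering in E without parameters: for every n ≥ 1 and every first-order formula φ(x₁, …, xₙ, y₁, …, yₙ) with 2n free variables in the language of E, if the 2n-ary relation ≤_L defined by X̄ ≤_L Ȳ iff E ⊨ φ(X̄, Ȳ) is a linear preorder on n-tuples of c.e. sets (transitive, and for all n-tuples X̄, Ȳ of c.e. sets either X̄ ≤_L Ȳ or Ȳ ≤_L X̄), then the equivalence relation defined by X̄ ≡_L Ȳ iff X̄ ≤_L Ȳ and Ȳ ≤_L X̄ has only finitely many equivalence classes. -/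
open FirstOrder

/-- The universe of the structure `E`: all c.e. subsets of `ℕ`. -/
def CESets : Type := {A : Set ℕ // CE A}

/-- The relation symbols of the language of `E`: a single binary relation
(interpreted as inclusion). -/
inductive incRel : ℕ → Type
  | inc : incRel 2

/-- The language of `E`, with one binary relation symbol. -/
def Linc : Language := ⟨fun _ => Empty, incRel⟩

/-- The structure `E`: c.e. sets with the binary relation interpreted as set
inclusion. -/
instance EStructure : Linc.Structure CESets where
  funMap := fun f _ => f.elim
  RelMap | .inc => fun x => (x 0).val ⊆ (x 1).val

open Filter in
theorem ramsey_pairs {F : Type} [Finite F] (c : ℕ → ℕ → F) :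
    ∃ (h : ℕ → ℕ) (d : F), ∀ m n, m < n → h m < h n ∧ c (h m) (h n) = d := by
  have key : ∀ e : ℕ → F, ∃ d, ∀ᶠ j in (hyperfilter ℕ : Filter ℕ), e j = d := by
    intro e
    have h1 : (Set.univ : Set F).Finite := Set.finite_univ
    have h2 : (⋃ d ∈ (Set.univ : Set F), {j | e j = d}) ∈ hyperfilter ℕ := by
      have h3 : (⋃ d ∈ (Set.univ : Set F), {j | e j = d}) = Set.univ := by
        ext j; simp
      rw [h3]
      exact Filter.univ_mem
    obtain ⟨d, -, hd⟩ := (Ultrafilter.finite_biUnion_mem_iff h1).1 h2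
    exact ⟨d, hd⟩
  choose d hd using fun i => key (c i)
  obtain ⟨D, hD⟩ := key d
  obtain ⟨h, _, h2⟩ := exists_seq_of_forall_finset_exists (fun i => d i = D)
    (fun i j => i < j ∧ c i j = D) (by
      intro s hs
      have : ∀ᶠ j in (hyperfilter ℕ : Filter ℕ), d j = D ∧ ∀ x ∈ s, x < j ∧ c x j = D := by
        refine hD.and ?_
        rw [Filter.eventually_all_finset]
        intro x hx
        have := hd x
        rw [hs x hx] at this
        exact ((Filter.eventually_gt_atTop x).filter_mono
          (Nat.hyperfilter_le_atTop)).and this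
      exact this.exists)
  exact ⟨h, D, h2⟩

theorem comb {M F : Type} [Finite F] (Le : M → M → M → M → Prop)
    (htr : ∀ a b c d e f, Le a b c d → Le c d e f → Le a b e f)
    (hto : ∀ a b c d, Le a b c d ∨ Le c d a b)
    (hsw : ∀ a b, Le a b b a)
    (col : M → M → F) (S : F → F → Prop)
    (hS : ∀ a b c d, Le a b c d ↔ S (col a c) (col b d))
    (a b : ℕ → M)
    (hne : ∀ i j, i < j → ¬ (Le (a i) (b i) (a j) (b j) ∧ Le (a j) (b j) (a i) (b i))) :
    False := by
  let x : Bool → ℕ → M := fun s i => if s then a i else b i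
  obtain ⟨h, D, hD⟩ := ramsey_pairs
    (fun i j => (fun s t => (col (x s i) (x t j), col (x s j) (x t i)) : Bool → Bool → F × F))
  have hu : ∀ s t i j, i < j → col (x s (h i)) (x t (h j)) = (D s t).1 := by
    intro s t i j hij
    rw [← (hD i j hij).2]
  have hv : ∀ s t i j, i < j → col (x s (h j)) (x t (h i)) = (D s t).2 := by
    intro s t i j hij
    rw [← (hD i j hij).2]
  have hW : ∀ i j k l, Le (a (h i)) (b (h j)) (b (h l)) (a (h k)) ↔
      Le (a (h i)) (b (h j)) (a (h k)) (b (h l)) := fun i j k l =>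
    ⟨fun H => htr _ _ _ _ _ _ H (hsw _ _), fun H => htr _ _ _ _ _ _ H (hsw _ _)⟩
  -- values
  have Vpp : ∀ i j k l, i < k → j < l → (Le (a (h i)) (b (h j)) (a (h k)) (b (h l)) ↔
      S (D true true).1 (D false false).1) := fun i j k l h1 h2 => by
    rw [hS, ← hu true true i k h1, ← hu false false j l h2]; simp [x]
  have Vpm : ∀ i j k l, i < k → l < j → (Le (a (h i)) (b (h j)) (a (h k)) (b (h l)) ↔
      S (D true true).1 (D false false).2) := fun i j k l h1 h2 => by
    rw [hS, ← hu true true i k h1, ← hv false false l j h2]; simp [x]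
  have Vmp : ∀ i j k l, k < i → j < l → (Le (a (h i)) (b (h j)) (a (h k)) (b (h l)) ↔
      S (D true true).2 (D false false).1) := fun i j k l h1 h2 => by
    rw [hS, ← hv true true k i h1, ← hu false false j l h2]; simp [x]
  have Vmm : ∀ i j k l, k < i → l < j → (Le (a (h i)) (b (h j)) (a (h k)) (b (h l)) ↔
      S (D true true).2 (D false false).2) := fun i j k l h1 h2 => by
    rw [hS, ← hv true true k i h1, ← hv false false l j h2]; simp [x]
  have W : ∀ i j k l, i < l → j < k → (Le (a (h i)) (b (h j)) (a (h k)) (b (h l)) ↔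
      S (D true false).1 (D false true).1) := fun i j k l h1 h2 => by
    rw [← hW, hS, ← hu true false i l h1, ← hu false true j k h2]; simp [x]
  have e1 := (Vpp 1 0 2 3 (by lia) (by lia)).symm.trans (W 1 0 2 3 (by lia) (by lia))
  have e2 := (Vmp 2 0 1 3 (by lia) (by lia)).symm.trans (W 2 0 1 3 (by lia) (by lia))
  have e3 := (Vpm 0 2 3 1 (by lia) (by lia)).symm.trans (W 0 2 3 1 (by lia) (by lia))
  have hx : ¬ (S (D true true).1 (D false false).1 ∧ S (D true true).2 (D false false).2) := by
    rw [← Vpp 0 0 1 1 (by lia) (by lia), ← Vmm 1 1 0 0 (by lia) (by lia)]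
    exact hne _ _ (hD 0 1 (by lia)).1
  by_cases hA : S (D true true).1 (D false false).1
  · apply hx
    refine ⟨hA, ?_⟩
    rw [← Vmm 5 8 2 3 (by lia) (by lia)]
    exact htr _ _ _ _ _ _ ((Vmp 5 8 1 10 (by lia) (by lia)).2 (e2.2 (e1.1 hA)))
      ((Vpm 1 10 2 3 (by lia) (by lia)).2 (e3.2 (e1.1 hA)))
  · rcases hto (a (h 0)) (b (h 1)) (a (h 1)) (b (h 0)) with H | H
    · exact hA (e1.2 (e3.1 ((Vpm 0 1 1 0 (by lia) (by lia)).1 H)))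
    · exact hA (e1.2 (e2.1 ((Vmp 1 0 0 1 (by lia) (by lia)).1 H)))

/-- Preimage of a c.e. set under a computable function. -/
def cePre (h : ℕ → ℕ) (hh : Computable h) (A : CESets) : CESets :=
  ⟨h ⁻¹' A.1, by
    obtain ⟨f, hf, hA⟩ := A.2
    exact ⟨fun n => f (h n), hf.comp hh, by rw [hA]; rfl⟩⟩

theorem comp_even : Computable (fun n : ℕ => 2 * n) :=
  (Primrec.nat_mul.comp (Primrec.const 2) Primrec.id).to_comp
theorem comp_odd : Computable (fun n : ℕ => 2 * n + 1) :=
  (Primrec.succ.comp (Primrec.nat_mul.comp (Primrec.const 2) Primrec.id)).to_comp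

/-- Left (even) half. -/
def ceL : CESets → CESets := cePre _ comp_even
/-- Right (odd) half. -/
def ceR : CESets → CESets := cePre _ comp_odd

/-- Join of two c.e. sets. -/
def ceJoin (A B : CESets) : CESets :=
  ⟨{n | if n % 2 = 0 then n / 2 ∈ A.1 else n / 2 ∈ B.1}, by
    obtain ⟨f, hf, hA⟩ := A.2
    obtain ⟨g, hg, hB⟩ := B.2
    have hc : Computable (fun n : ℕ => decide (n % 2 = 0)) := by
      have : PrimrecPred (fun n : ℕ => n % 2 = 0) :=
        Primrec.eq.comp (Primrec.nat_mod.comp Primrec.id (Primrec.const 2)) (Primrec.const 0)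
      exact this.decide.to_comp
    have hd : Computable (fun n : ℕ => n / 2) :=
      (Primrec.nat_div.comp Primrec.id (Primrec.const 2)).to_comp
    refine ⟨_, Partrec.cond hc (hf.comp hd) (hg.comp hd), ?_⟩
    ext n
    rw [hA, hB]
    by_cases h : n % 2 = 0
    · simp [h, PFun.Dom]
    · simp [h, PFun.Dom]⟩

theorem ceL_join (A B : CESets) : ceL (ceJoin A B) = A := by
  apply Subtype.ext
  ext n
  simp [ceL, cePre, ceJoin]

theorem ceR_join (A B : CESets) : ceR (ceJoin A B) = B := by
  apply Subtype.ext
  ext n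
  have h1 : (2 * n + 1) % 2 = 1 := by lia
  have h2 : (2 * n + 1) / 2 = n := by lia
  simp [ceR, cePre, ceJoin, h1, h2]

theorem ce_sub_iff (A B : CESets) :
    A.1 ⊆ B.1 ↔ (ceL A).1 ⊆ (ceL B).1 ∧ (ceR A).1 ⊆ (ceR B).1 := by
  constructor
  · intro h
    exact ⟨fun n hn => h hn, fun n hn => h hn⟩
  · rintro ⟨h1, h2⟩ n hn
    rcases Nat.even_or_odd' n with ⟨k, rfl | rfl⟩
    · exact h1 hn
    · exact h2 hn

theorem ce_eq_iff (A B : CESets) : A = B ↔ ceL A = ceL B ∧ ceR A = ceR B := by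
  constructor
  · rintro rfl; exact ⟨rfl, rfl⟩
  · rintro ⟨h1, h2⟩
    apply Subtype.ext
    apply Set.Subset.antisymm
    · rw [ce_sub_iff, h1, h2]; exact ⟨subset_rfl, subset_rfl⟩
    · rw [ce_sub_iff, h1, h2]; exact ⟨subset_rfl, subset_rfl⟩

theorem ceJoin_LR (A : CESets) : ceJoin (ceL A) (ceR A) = A := by
  rw [ce_eq_iff, ceL_join, ceR_join]; exact ⟨rfl, rfl⟩

/-- Swap automorphism. -/
def ceSwap : CESets ≃[Linc] CESets where
  toFun A := ceJoin (ceR A) (ceL A)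
  invFun A := ceJoin (ceR A) (ceL A)
  left_inv A := by simp only [ceL_join, ceR_join, ceJoin_LR]
  right_inv A := by simp only [ceL_join, ceR_join, ceJoin_LR]
  map_fun' f _ := f.elim
  map_rel' r x := by
    cases r
    change (ceJoin (ceR (x 0)) (ceL (x 0))).1 ⊆ (ceJoin (ceR (x 1)) (ceL (x 1))).1 ↔
      (x 0).1 ⊆ (x 1).1
    rw [ce_sub_iff, ce_sub_iff (x 0)]
    simp only [ceL_join, ceR_join]
    exact and_comm

theorem term_map {β : Type} (h : CESets → CESets) (t : Linc.Term β) (v : β → CESets) :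
    h (t.realize v) = t.realize (h ∘ v) := by
  cases t with
  | var i => rfl
  | func f _ => exact f.elim

open FirstOrder.Language in
theorem rect {α : Type} {n : ℕ} (φ : Linc.BoundedFormula α n) :
    ∃ (F : Type) (_ : Finite F) (f g : (α → CESets) → (Fin n → CESets) → F)
      (S : F → F → Prop), ∀ v xs, φ.Realize v xs ↔
        S (f (ceL ∘ v) (ceL ∘ xs)) (g (ceR ∘ v) (ceR ∘ xs)) := by
  induction φ with
  | falsum => exact ⟨Unit, inferInstance, fun _ _ => (), fun _ _ => (), fun _ _ => False,
      fun v xs => Iff.rfl⟩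
  | equal t₁ t₂ =>
    refine ⟨Prop, inferInstance, fun v xs => t₁.realize (Sum.elim v xs) = t₂.realize (Sum.elim v xs),
      fun v xs => t₁.realize (Sum.elim v xs) = t₂.realize (Sum.elim v xs), fun p q => p ∧ q, ?_⟩
    intro v xs
    change t₁.realize (Sum.elim v xs) = t₂.realize (Sum.elim v xs) ↔ _
    rw [ce_eq_iff]
    simp only [term_map, Sum.comp_elim]
  | rel r ts =>
    refine ⟨Prop, inferInstance,
      fun v xs => Structure.RelMap r (fun i => (ts i).realize (Sum.elim v xs)),
      fun v xs => Structure.RelMap r (fun i => (ts i).realize (Sum.elim v xs)),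
      fun p q => p ∧ q, ?_⟩
    intro v xs
    cases r
    change ((ts 0).realize (Sum.elim v xs)).1 ⊆ ((ts 1).realize (Sum.elim v xs)).1 ↔
      ((ts 0).realize (Sum.elim (ceL ∘ v) (ceL ∘ xs))).1 ⊆
        ((ts 1).realize (Sum.elim (ceL ∘ v) (ceL ∘ xs))).1 ∧
      ((ts 0).realize (Sum.elim (ceR ∘ v) (ceR ∘ xs))).1 ⊆
        ((ts 1).realize (Sum.elim (ceR ∘ v) (ceR ∘ xs))).1
    rw [ce_sub_iff]
    simp only [term_map, Sum.comp_elim]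
  | imp φ ψ ih1 ih2 =>
    obtain ⟨F, _, f, g, S, h⟩ := ih1
    obtain ⟨F', _, f', g', S', h'⟩ := ih2
    refine ⟨F × F', inferInstance, fun v xs => (f v xs, f' v xs), fun v xs => (g v xs, g' v xs),
      fun p q => S p.1 q.1 → S' p.2 q.2, ?_⟩
    intro v xs
    rw [BoundedFormula.realize_imp, h, h']
  | all φ ih =>
    obtain ⟨F, _, f, g, S, h⟩ := ih
    refine ⟨Set F, inferInstance, fun v xs => Set.range fun y => f v (Fin.snoc xs y),
      fun v xs => Set.range fun y => g v (Fin.snoc xs y),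
      fun P Q => ∀ p ∈ P, ∀ q ∈ Q, S p q, ?_⟩
    intro v xs
    rw [BoundedFormula.realize_all]
    simp only [h, Fin.comp_snoc, Set.forall_mem_range]
    constructor
    · intro H y z
      have := H (ceJoin y z)
      rwa [ceL_join, ceR_join] at this
    · intro H y
      exact H _ _

/-- No infinite linear ordering can be coded in `E` without
parameters: if a first-order formula `φ` with `2n` free variables defines a linear
preorder `≤_L` on `n`-tuples of c.e. sets (transitive and total), then the induced
equivalence relation `≡_L` has only finitely many classes. -/
theorem stmt19 (n : ℕ) (hn : 1 ≤ n) (φ : Linc.Formula (Fin n ⊕ Fin n))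
    (htrans : ∀ X Y Z : Fin n → CESets,
      φ.Realize (Sum.elim X Y) → φ.Realize (Sum.elim Y Z) → φ.Realize (Sum.elim X Z))
    (htotal : ∀ X Y : Fin n → CESets,
      φ.Realize (Sum.elim X Y) ∨ φ.Realize (Sum.elim Y X)) :
    ∃ T : Set (Fin n → CESets), T.Finite ∧
      ∀ X : Fin n → CESets, ∃ Y ∈ T,
        φ.Realize (Sum.elim X Y) ∧ φ.Realize (Sum.elim Y X) := by
  classical
  let J : (Fin n → CESets) → (Fin n → CESets) → (Fin n → CESets) := fun a b i => ceJoin (a i) (b i)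
  have hJL : ∀ a b, ceL ∘ J a b = a := fun a b => funext fun i => ceL_join _ _
  have hJR : ∀ a b, ceR ∘ J a b = b := fun a b => funext fun i => ceR_join _ _
  have hJ : ∀ X : Fin n → CESets, J (ceL ∘ X) (ceR ∘ X) = X := fun X =>
    funext fun i => ceJoin_LR _
  obtain ⟨F, _, f, g, S, hS⟩ := rect φ
  by_contra hcon
  obtain ⟨X, -, hX⟩ := exists_seq_of_forall_finset_exists (fun _ : Fin n → CESets => True)
    (fun X Y => ¬ (φ.Realize (Sum.elim X Y) ∧ φ.Realize (Sum.elim Y X))) (by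
      intro s _
      by_contra hc
      push Not at hc
      apply hcon
      refine ⟨s, s.finite_toSet, fun Y => ?_⟩
      obtain ⟨x, hx, h1, h2⟩ := hc Y trivial
      exact ⟨x, hx, h2, h1⟩)
  refine comb (M := Fin n → CESets) (F := F × F)
    (fun a b c d => φ.Realize (Sum.elim (J a b) (J c d)))
    (fun a b c d e f => htrans _ _ _) (fun a b c d => htotal _ _) ?_
    (fun a c => (f (Sum.elim a c) default, g (Sum.elim a c) default))
    (fun p q => S p.1 q.2) ?_ (fun i => ceL ∘ X i) (fun i => ceR ∘ X i) ?_
  · intro a b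
    have hs : ∀ a b, ceSwap ∘ J a b = J b a := fun a b => by
      funext i
      change ceJoin (ceR (ceJoin _ _)) (ceL (ceJoin _ _)) = _
      rw [ceL_join, ceR_join]
    have := FirstOrder.Language.StrongHomClass.realize_formula ceSwap φ
      (v := Sum.elim (J b a) (J a b))
    rw [Sum.comp_elim, hs, hs] at this
    rcases htotal (J a b) (J b a) with h | h
    · exact h
    · exact this.2 h
  · intro a b c d
    have := hS (Sum.elim (J a b) (J c d)) default
    rw [Sum.comp_elim, Sum.comp_elim, hJL, hJL, hJR, hJR] at this
    refine this.trans ?_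
    rw [Subsingleton.elim (ceL ∘ _) default, Subsingleton.elim (ceR ∘ _) default]
  · intro i j hij
    simp only [hJ]
    exact hX i j hij
end
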